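/- arXiv:2105.10458 — 3 statements merged into one kernel-verified Lean document; each statement's English description precedes it below -/
import Mathlib

section
/- Let L ⊂ R^d be a full-rank lattice and X a positive basis for L. Then, as t → ∞, the number of points of L⁺ \ S(X) of Euclidean norm at most t equals (ω_d(1 − ν(X)·2^d)/(2^d det L))·t^d + O(t^{d−1}), where ν(X) is the solid-angle measure of the cone C(X) and ω_d is the volume of the unit ball in R^d. -/
open MeasureTheory Filter Asymptotics

/-!
The translates `y + P` of a fundamental parallelepiped `P` of the lattice tile the space, so the
number of lattice points in a region is, up to the factor `vol P`, the volume of the union of the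
tiles based at these points. For a convex body `Q` this union lies between translates of
`(t - c) • Q` and `(t + c) • Q`, whence `t • Q` contains
`(vol Q / vol P) t ^ d + O(t ^ (d - 1))` lattice points.

By linear independence of the basis, `S(X)` consists of the lattice points of the cone `C(X)`, so
the gaps are the lattice points of the orthant outside `C(X)`. Intersecting these two cones with
the unit ball gives two convex bodies, and subtracting their counts proves the theorem. The orthant
contributes `2⁻ᵈ` of the ball because it is a fundamental domain for the group of coordinate sign
changes.
-/

open Module Bornology
open scoped Pointwise Topology

section FundamentalDomain

variable {G α : Type*} [AddGroup G] [Countable G] [AddAction G α] [MeasurableSpace α]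
  [MeasurableConstVAdd G α] {μ : Measure α} [VAddInvariantMeasure G α μ] {P : Set α}

lemma measure_biUnion_vadd_fundamentalDomain (hP : IsAddFundamentalDomain G P μ) (s : Set G) :
    μ (⋃ g ∈ s, g +ᵥ P) = s.encard * μ P := by
  rw [measure_biUnion₀ s.to_countable (hP.aedisjoint.set_pairwise s)
    fun g _ => hP.nullMeasurableSet_vadd g]
  simp_rw [measure_vadd, ENNReal.tsum_set_const]

end FundamentalDomain

section LatticePoints

variable {E : Type*} [AddCommGroup E] [MeasurableSpace E] [MeasurableAdd E] {μ : Measure E}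
  [μ.IsAddLeftInvariant] {L : AddSubgroup E} [Countable L] {P A B : Set E}

lemma encard_latticePoints_mul_measure (hP : IsAddFundamentalDomain L P μ) (A : Set E) :
    (L ∩ A : Set E).encard * μ P = μ (⋃ g ∈ ((↑) ⁻¹' A : Set L), g +ᵥ P) := by
  have himage : (L ∩ A : Set E) = (↑) '' ((↑) ⁻¹' A : Set L) :=
    (Subtype.image_preimage_coe (L : Set E) A).symm
  rw [measure_biUnion_vadd_fundamentalDomain hP, himage, Subtype.val_injective.encard_image]

lemma encard_latticePoints_mul_measure_le (hP : IsAddFundamentalDomain L P μ)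
    (hAB : A + P ⊆ B) : (L ∩ A : Set E).encard * μ P ≤ μ B := by
  rw [encard_latticePoints_mul_measure hP]
  refine measure_mono (Set.iUnion₂_subset fun g hg => ?_)
  rintro _ ⟨p, hp, rfl⟩
  exact hAB (Set.add_mem_add hg hp)

lemma measure_le_encard_latticePoints_mul (hP : IsAddFundamentalDomain L P μ)
    (hBA : B - P ⊆ A) : μ B ≤ (L ∩ A : Set E).encard * μ P := by
  rw [encard_latticePoints_mul_measure hP]
  refine measure_mono_ae ?_
  filter_upwards [hP.ae_covers] with z ⟨g, hg⟩ hz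
  refine Set.mem_iUnion₂.2 ⟨-g, hBA ?_, Set.mem_vadd_set_iff_neg_vadd_mem.2 (by rwa [neg_neg])⟩
  exact ⟨z, hz, g +ᵥ z, hg, by simp [AddSubgroup.vadd_def]⟩

end LatticePoints

section Asymptotics

lemma isBigO_add_pow_sub_pow (c : ℝ) (n : ℕ) :
    (fun t : ℝ => (t + c) ^ n - t ^ n) =O[atTop] fun t => t ^ (n - 1) := by
  refine IsBigO.of_bound (|c| * n * 2 ^ (n - 1)) ?_
  filter_upwards [eventually_ge_atTop |c|] with t ht
  have ht0 : 0 ≤ t := (abs_nonneg c).trans ht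
  have hmax : max |t + c| |t| ≤ 2 * t := by
    rw [max_le_iff, abs_of_nonneg ht0]
    constructor <;> linarith [abs_add_le t c, abs_of_nonneg ht0]
  calc ‖(t + c) ^ n - t ^ n‖ ≤ |t + c - t| * n * max |t + c| |t| ^ (n - 1) :=
        abs_pow_sub_pow_le _ _ _
    _ ≤ |c| * n * (2 * t) ^ (n - 1) := by rw [add_sub_cancel_left]; gcongr
    _ = |c| * n * 2 ^ (n - 1) * ‖t ^ (n - 1)‖ := by
        rw [Real.norm_of_nonneg (pow_nonneg ht0 _), mul_pow, mul_assoc _ (2 ^ (n - 1))]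

lemma isBigO_of_le_of_le {α : Type*} {l : Filter α} {f g₁ g₂ h : α → ℝ} (hg₁ : g₁ =O[l] h)
    (hg₂ : g₂ =O[l] h) (hle₁ : g₁ ≤ᶠ[l] f) (hle₂ : f ≤ᶠ[l] g₂) : f =O[l] h := by
  refine IsBigO.trans (.of_norm_eventuallyLE ?_) (hg₁.norm_left.add hg₂.norm_left)
  filter_upwards [hle₁, hle₂] with x hx₁ hx₂
  exact (abs_le_max_abs_abs hx₁ hx₂).trans (max_le_add_of_nonneg (abs_nonneg _) (abs_nonneg _))

end Asymptotics

section Dilation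

variable {E : Type*} [NormedAddCommGroup E] [NormedSpace ℝ E]

lemma smul_add_closedBall_subset {Q : Set E} {q : E} {r s c : ℝ} (hQ : Convex ℝ Q)
    (hq : Metric.closedBall q r ⊆ Q) (hr : 0 ≤ r) (hs : 0 ≤ s) (hc : 0 ≤ c) :
    s • Q + Metric.closedBall 0 (c * r) ⊆ -(c • q) +ᵥ (s + c) • Q := by
  have hball : Metric.closedBall 0 (c * r) = -(c • q) +ᵥ c • Metric.closedBall q r := by
    rw [smul_closedBall _ _ hr, Metric.vadd_closedBall, Real.norm_of_nonneg hc, vadd_eq_add,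
      neg_add_cancel]
  calc s • Q + Metric.closedBall 0 (c * r)
      ⊆ s • Q + (-(c • q) +ᵥ c • Q) := by rw [hball]; gcongr
    _ = -(c • q) +ᵥ (s + c) • Q := by rw [hQ.add_smul hs hc, add_vadd_comm]

lemma smul_cone_inter (K : ConvexCone ℝ E) (D : Set E) {t : ℝ} (ht : 0 < t) :
    t • (K ∩ D : Set E) = (K : Set E) ∩ t • D := by
  ext y
  simp only [Set.mem_smul_set_iff_inv_smul_mem₀ ht.ne', Set.mem_inter_iff, SetLike.mem_coe,
    K.smul_mem_iff (inv_pos.2 ht)]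

lemma interior_cone_inter_nonempty {K : ConvexCone ℝ E} {D : Set E}
    (hK : (interior (K : Set E)).Nonempty) (hD : D ∈ 𝓝 0) :
    (interior (K ∩ D : Set E)).Nonempty := by
  obtain ⟨x, hx⟩ := hK
  have hlim : Tendsto (fun t : ℝ => t • x) (𝓝[>] 0) (𝓝 0) := by
    have : Tendsto (fun t : ℝ => t • x) (𝓝 0) (𝓝 0) := by
      simpa using (tendsto_id (α := ℝ) (x := 𝓝 0)).smul_const x
    exact this.mono_left nhdsWithin_le_nhds
  obtain ⟨t, htD, ht : 0 < t⟩ :=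
    ((hlim.eventually (interior_mem_nhds.2 hD)).and self_mem_nhdsWithin).exists
  have hKt : t • (K : Set E) = K := by
    simpa [Set.smul_set_univ₀ ht.ne'] using smul_cone_inter K Set.univ ht
  refine ⟨t • x, ?_⟩
  rw [interior_inter, ← hKt, interior_smul₀ ht.ne']
  exact ⟨Set.smul_mem_smul_set hx, htD⟩

end Dilation

section LatticePointCount

variable {E : Type*} [NormedAddCommGroup E] [NormedSpace ℝ E] [FiniteDimensional ℝ E]
  [MeasurableSpace E] [BorelSpace E] {μ : Measure E} [μ.IsAddHaarMeasure]
  {L : AddSubgroup E} [Countable L] {P Q : Set E}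

lemma finite_latticePoints {A : Set E} (hP : IsAddFundamentalDomain L P μ) (hPb : IsBounded P)
    (hA : IsBounded A) : (L ∩ A : Set E).Finite := by
  have hlt : (L ∩ A : Set E).encard * μ P < ⊤ :=
    (encard_latticePoints_mul_measure_le hP subset_rfl).trans_lt (hA.add hPb).measure_lt_top
  simpa using ENNReal.lt_top_of_mul_ne_top_left hlt.ne (hP.measure_ne_zero (NeZero.ne μ))

lemma measureReal_vadd_smul (v : E) {s : ℝ} (hs : 0 ≤ s) (Q : Set E) :
    μ.real (v +ᵥ s • Q) = s ^ finrank ℝ E * μ.real Q := by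
  rw [measureReal_def, measure_vadd, Measure.addHaar_smul_of_nonneg μ hs, ENNReal.toReal_mul,
    ENNReal.toReal_ofReal (by positivity), measureReal_def]

lemma exists_ncard_latticePoints_bounds (hP : IsAddFundamentalDomain L P μ) (hPb : IsBounded P)
    (hQ : Convex ℝ Q) (hQb : IsBounded Q) (hQi : (interior Q).Nonempty) :
    ∃ c, ∀ t ≥ c,
      (t - c) ^ finrank ℝ E * μ.real Q ≤ (L ∩ t • Q : Set E).ncard * μ.real P ∧
      (L ∩ t • Q : Set E).ncard * μ.real P ≤ (t + c) ^ finrank ℝ E * μ.real Q := by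
  obtain ⟨q, hq⟩ := hQi
  obtain ⟨r, hr, hrQ⟩ := Metric.nhds_basis_closedBall.mem_iff.1 (mem_interior_iff_mem_nhds.1 hq)
  obtain ⟨R, hR, hPR⟩ := hPb.subset_closedBall_lt 0 0
  obtain ⟨c, hc, rfl⟩ : ∃ c, 0 ≤ c ∧ c * r = R := ⟨R / r, by positivity, by field_simp⟩
  refine ⟨c, fun t ht => ?_⟩
  have ht0 : 0 ≤ t := hc.trans ht
  have hfin : (L ∩ t • Q : Set E).Finite := finite_latticePoints hP hPb (hQb.smul₀ t)
  have hcount : (L ∩ t • Q : Set E).ncard * μ.real P =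
      ((L ∩ t • Q : Set E).encard * μ P).toReal := by
    simp [← hfin.cast_ncard_eq, measureReal_def]
  rw [hcount, ← measureReal_vadd_smul (c • q) (sub_nonneg.2 ht),
    ← measureReal_vadd_smul (-(c • q)) (add_nonneg ht0 hc)]
  constructor
  · refine ENNReal.toReal_mono ?_ (measure_le_encard_latticePoints_mul hP ?_)
    · simp [← hfin.cast_ncard_eq, ENNReal.mul_eq_top, hPb.measure_lt_top.ne]
    calc (c • q +ᵥ (t - c) • Q) - P
        ⊆ c • q +ᵥ ((t - c) • Q + Metric.closedBall 0 (c * r)) := by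
          rw [sub_eq_add_neg, vadd_add_assoc]
          gcongr
          simpa using Set.neg_subset_neg.2 hPR
      _ ⊆ c • q +ᵥ (-(c • q) +ᵥ (t - c + c) • Q) := by
          gcongr
          exact smul_add_closedBall_subset hQ hrQ hr.le (sub_nonneg.2 ht) hc
      _ = t • Q := by rw [vadd_neg_vadd, sub_add_cancel]
  · refine ENNReal.toReal_mono ((hQb.smul₀ _).vadd _).measure_lt_top.ne
      (encard_latticePoints_mul_measure_le hP ?_)
    exact (Set.add_subset_add_left hPR).trans
      (smul_add_closedBall_subset hQ hrQ hr.le ht0 hc)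

theorem isBigO_ncard_latticePoints_sub (hP : IsAddFundamentalDomain L P μ) (hPb : IsBounded P)
    (hQ : Convex ℝ Q) (hQb : IsBounded Q) (hQi : (interior Q).Nonempty) :
    (fun t : ℝ => (L ∩ t • Q : Set E).ncard - μ.real Q / μ.real P * t ^ finrank ℝ E) =O[atTop]
      fun t => t ^ (finrank ℝ E - 1) := by
  set n := finrank ℝ E
  obtain ⟨c, hc⟩ := exists_ncard_latticePoints_bounds hP hPb hQ hQb hQi
  have hP0 : 0 < μ.real P :=
    ENNReal.toReal_pos (hP.measure_ne_zero (NeZero.ne μ)) hPb.measure_lt_top.ne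
  refine isBigO_of_le_of_le
    ((isBigO_add_pow_sub_pow (-c) n).const_mul_left (μ.real Q / μ.real P))
    ((isBigO_add_pow_sub_pow c n).const_mul_left (μ.real Q / μ.real P)) ?_ ?_
  all_goals
    filter_upwards [eventually_ge_atTop c] with t ht
    rw [mul_sub]
    gcongr
  · rw [div_mul_eq_mul_div, div_le_iff₀ hP0, mul_comm, ← sub_eq_add_neg]
    exact (hc t ht).1
  · rw [div_mul_eq_mul_div, le_div_iff₀ hP0, mul_comm (μ.real Q)]
    exact (hc t ht).2

theorem isBigO_ncard_cone_sdiff_sub {D : Set E} {K₁ K₂ : ConvexCone ℝ E}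
    (hP : IsAddFundamentalDomain L P μ) (hPb : IsBounded P) (hK : K₁ ≤ K₂)
    (hKi : (interior (K₁ : Set E)).Nonempty) (hD : Convex ℝ D) (hDb : IsBounded D)
    (hD0 : D ∈ 𝓝 0) :
    (fun t : ℝ => (L ∩ ((K₂ \ K₁) ∩ t • D) : Set E).ncard -
      (μ.real (K₂ ∩ D) - μ.real (K₁ ∩ D)) / μ.real P * t ^ finrank ℝ E) =O[atTop]
      fun t => t ^ (finrank ℝ E - 1) := by
  have count (K : ConvexCone ℝ E) (hKi : (interior (K : Set E)).Nonempty) :=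
    isBigO_ncard_latticePoints_sub hP hPb (K.convex.inter hD) (hDb.subset Set.inter_subset_right)
      (interior_cone_inter_nonempty hKi hD0)
  refine ((count K₂ (hKi.mono (interior_mono hK))).sub (count K₁ hKi)).congr' ?_ .rfl
  filter_upwards [eventually_gt_atTop 0] with t ht
  rw [smul_cone_inter K₁ D ht, smul_cone_inter K₂ D ht]
  have hsub : (L ∩ (K₁ ∩ t • D) : Set E) ⊆ L ∩ (K₂ ∩ t • D : Set E) := by gcongr
  have hfin : (L ∩ (K₂ ∩ t • D) : Set E).Finite :=
    finite_latticePoints hP hPb ((hDb.smul₀ t).subset Set.inter_subset_right)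
  have hsdiff : (L ∩ ((K₂ \ K₁) ∩ t • D) : Set E) =
      (L ∩ (K₂ ∩ t • D) : Set E) \ (L ∩ (K₁ ∩ t • D)) := by
    rw [← Set.inter_sdiff_distrib_left, Set.inter_sdiff_distrib_right]
  rw [hsdiff, Set.cast_ncard_sdiff hsub hfin]
  ring

end LatticePointCount

section SimplicialCone

variable {ι : Type*}

lemma mem_span_range_iff_exists_algebraMap {R A M : Type*} [CommSemiring R] [Semiring A]
    [Algebra R A] [AddCommMonoid M] [Module A M] [Module R M] [IsScalarTower R A M] [Fintype ι]
    {x : ι → M} {y : M} :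
    y ∈ Submodule.span R (Set.range x) ↔ ∃ a : ι → R, y = ∑ i, algebraMap R A (a i) • x i := by
  simp only [Submodule.mem_span_range_iff_exists_fun, algebraMap_smul, eq_comm]

lemma mem_hull_range_iff {R M : Type*} [Semiring R] [PartialOrder R] [IsOrderedRing R]
    [AddCommMonoid M] [Module R M] [Fintype ι] {x : ι → M} {y : M} :
    y ∈ PointedCone.hull R (Set.range x) ↔ ∃ c : ι → R, (∀ i, 0 ≤ c i) ∧ y = ∑ i, c i • x i := by
  simp only [Submodule.mem_span_range_iff_exists_fun, eq_comm (a := y)]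
  exact ⟨fun ⟨c, hc⟩ => ⟨fun i => c i, fun i => (c i).2, hc⟩,
    fun ⟨c, hc, h⟩ => ⟨fun i => ⟨c i, hc i⟩, h⟩⟩

lemma span_nat_eq_span_int_inter_hull {R M : Type*} [Ring R] [PartialOrder R]
    [IsStrictOrderedRing R] [AddCommGroup M] [Module R M] [Finite ι] {x : ι → M}
    (hx : LinearIndependent R x) :
    (Submodule.span ℕ (Set.range x) : Set M) =
      (Submodule.span ℤ (Set.range x) : Set M) ∩ PointedCone.hull R (Set.range x) := by
  cases nonempty_fintype ι
  ext y
  simp only [Set.mem_inter_iff, SetLike.mem_coe, mem_hull_range_iff,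
    mem_span_range_iff_exists_algebraMap (A := R), eq_natCast, eq_intCast]
  constructor
  · rintro ⟨a, rfl⟩
    exact ⟨⟨fun i => a i, by simp⟩, fun i => a i, fun i => Nat.cast_nonneg _, rfl⟩
  · rintro ⟨⟨a, rfl⟩, c, hc, hac⟩
    have ha (i : ι) : 0 ≤ a i := by
      have heq : (a i : R) = c i := Fintype.linearIndependent_iffₛ.1 hx _ _ hac i
      exact Int.cast_nonneg_iff.1 (heq ▸ hc i)
    lift a to ι → ℕ using ha
    exact ⟨a, by simp⟩

lemma hull_range_le_positive {R M : Type*} [Semiring R] [PartialOrder R] [IsOrderedRing R]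
    [AddCommGroup M] [PartialOrder M] [IsOrderedAddMonoid M] [Module R M] [PosSMulMono R M]
    {x : ι → M} (hx : ∀ i, 0 ≤ x i) :
    PointedCone.hull R (Set.range x) ≤ PointedCone.positive R M :=
  Submodule.span_le.2 (Set.range_subset_iff.2 hx)

lemma interior_hull_range_basis_nonempty {E : Type*} [NormedAddCommGroup E] [NormedSpace ℝ E]
    [Finite ι] (b : Basis ι ℝ E) :
    (interior (PointedCone.hull ℝ (Set.range b) : Set E)).Nonempty := by
  cases nonempty_fintype ι
  have := b.finiteDimensional_of_finite
  have hopen : IsOpen {y : E | ∀ i, 0 < b.repr y i} := by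
    rw [Set.ofPred_forall]
    exact isOpen_iInter_of_finite fun i =>
      isOpen_lt continuous_const (b.coord i).continuous_of_finiteDimensional
  refine ⟨∑ i, b i, mem_interior.2 ⟨_, fun y hy => ?_, hopen, fun i => by simp⟩⟩
  exact mem_hull_range_iff.2 ⟨b.repr y, fun i => (hy i).le, (b.sum_repr y).symm⟩

end SimplicialCone

section Orthant

variable {ι : Type*}

instance measurableConstSMul_signs : MeasurableConstSMul (ι → ℤˣ) (ι → ℝ) where
  measurable_const_smul g :=
    measurable_pi_iff.2 fun i => (measurable_pi_apply i).const_smul (g i)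

variable [Fintype ι]

lemma measurePreserving_signs_smul (g : ι → ℤˣ) :
    MeasurePreserving (g • · : (ι → ℝ) → ι → ℝ) :=
  volume_preserving_pi (f := fun i (r : ℝ) => g i • r) fun i => by
    obtain h | h := Int.units_eq_one_or (g i)
    · simpa [h] using! MeasurePreserving.id volume
    · simpa [h, Units.neg_smul] using Measure.measurePreserving_neg (volume : Measure ℝ)

instance smulInvariantMeasure_signs : SMulInvariantMeasure (ι → ℤˣ) (ι → ℝ) volume where
  measure_preimage_smul g _ hA :=
    (measurePreserving_signs_smul g).measure_preimage hA.nullMeasurableSet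

lemma isFundamentalDomain_signs_Ici : IsFundamentalDomain (ι → ℤˣ) (Set.Ici (0 : ι → ℝ)) := by
  refine .mk'' measurableSet_Ici.nullMeasurableSet (.of_forall fun y => ?_) (fun g hg => ?_)
    fun g => (measurePreserving_signs_smul g).quasiMeasurePreserving
  · have hsign (r : ℝ) : ∃ u : ℤˣ, 0 ≤ u • r := by
      obtain hr | hr := le_total 0 r
      · exact ⟨1, by simpa⟩
      · exact ⟨-1, by simpa [Units.neg_smul]⟩
    choose u hu using hsign
    exact ⟨fun i => u (y i), fun i => hu (y i)⟩
  · obtain ⟨i, hi⟩ := Function.ne_iff.1 hg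
    have hi : g i = -1 := (Int.units_eq_one_or (g i)).resolve_left hi
    refine measure_mono_null ?_ (Measure.pi_hyperplane (fun _ : ι => volume) i (0 : ℝ))
    rintro _ ⟨⟨y, hy, rfl⟩, hgy⟩
    have hgyi : 0 ≤ g i • y i := hgy i
    rw [hi, Units.neg_smul, one_smul] at hgyi
    have hyi : y i = 0 := le_antisymm (neg_nonneg.1 hgyi) (hy i)
    simp [Pi.smul_apply', hyi]

lemma volume_real_eq_two_pow_mul_Ici_inter {A : Set (ι → ℝ)} (hA : ∀ g : ι → ℤˣ, g • A = A) :
    volume.real A = 2 ^ Fintype.card ι * volume.real (Set.Ici 0 ∩ A) := by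
  classical
  have hvol : volume A = Nat.card (ι → ℤˣ) • volume (A ∩ Set.Ici 0) :=
    isFundamentalDomain_signs_Ici.measure_eq_card_smul_of_smul_ae_eq_self A
      fun g => .of_eq (hA g)
  simp [measureReal_def, hvol, Set.inter_comm]

end Orthant

section EuclideanBall

/-- The closed Euclidean unit ball of `ι → ℝ`, whose gauge measures the size of gaps. It is not
`Metric.closedBall 0 1`, because the norm of `ι → ℝ` in Mathlib is the supremum norm. -/
def euclideanBall (ι : Type*) [Fintype ι] : Set (ι → ℝ) := {p | ∑ i, p i ^ 2 ≤ 1}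

variable {ι : Type*} [Fintype ι]

lemma euclideanBall_eq_preimage_closedBall :
    euclideanBall ι = WithLp.toLp 2 ⁻¹' Metric.closedBall (0 : EuclideanSpace ℝ ι) 1 := by
  ext p
  simp [euclideanBall, EuclideanSpace.norm_eq]

lemma convex_euclideanBall : Convex ℝ (euclideanBall ι) := by
  rw [euclideanBall_eq_preimage_closedBall]
  exact (convex_closedBall _ _).linear_preimage (WithLp.linearEquiv 2 ℝ (ι → ℝ)).symm.toLinearMap

lemma isBounded_euclideanBall : IsBounded (euclideanBall ι) := by
  rw [euclideanBall_eq_preimage_closedBall]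
  exact (PiLp.antilipschitzWith_toLp 2 fun _ : ι => ℝ).isBounded_preimage
    Metric.isBounded_closedBall

lemma euclideanBall_mem_nhds_zero : euclideanBall ι ∈ 𝓝 0 := by
  rw [euclideanBall_eq_preimage_closedBall]
  exact (PiLp.continuous_toLp 2 fun _ : ι => ℝ).continuousAt.preimage_mem_nhds
    (Metric.closedBall_mem_nhds _ one_pos)

lemma signs_smul_euclideanBall (g : ι → ℤˣ) : g • euclideanBall ι = euclideanBall ι := by
  ext p
  have hsq (i : ι) : (g⁻¹ • p) i ^ 2 = p i ^ 2 := by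
    obtain h | h := Int.units_eq_one_or (g i) <;> simp [h, Units.neg_smul]
  simp only [Set.mem_smul_set_iff_inv_smul_mem, euclideanBall, Set.mem_ofPred_eq, hsq]

lemma mem_smul_euclideanBall_iff {t : ℝ} (ht : 0 < t) {y : ι → ℝ} :
    y ∈ t • euclideanBall ι ↔ Real.sqrt (∑ i, y i ^ 2) ≤ t := by
  rw [Set.mem_smul_set_iff_inv_smul_mem₀ ht.ne', Real.sqrt_le_left ht.le]
  simp [euclideanBall, mul_pow, ← Finset.mul_sum, inv_mul_le_iff₀ (pow_pos ht 2)]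

end EuclideanBall

section Gaps

variable {ι : Type*} {x : ι → ι → ℝ}

/-- The gaps of the monoid `S(X)` in `L⁺`, where `X` is the family `x`. The lattice `L` and `S(X)`
are encoded as the spans of `X` over `ℤ` and over `ℕ`. -/
def gaps (x : ι → ι → ℝ) : Set (ι → ℝ) :=
  ((Submodule.span ℤ (Set.range x) : Set (ι → ℝ)) ∩ Set.Ici 0) \ Submodule.span ℕ (Set.range x)

lemma mem_gaps_iff [Fintype ι] {y : ι → ℝ} :
    y ∈ gaps x ↔ (∃ a : ι → ℤ, y = ∑ i, (a i : ℝ) • x i) ∧ (∀ i, 0 ≤ y i) ∧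
      ¬∃ a : ι → ℕ, y = ∑ i, (a i : ℝ) • x i := by
  simp only [gaps, Set.mem_sdiff, Set.mem_inter_iff, SetLike.mem_coe,
    mem_span_range_iff_exists_algebraMap (A := ℝ), eq_intCast, eq_natCast, Set.mem_Ici, Pi.le_def,
    Pi.zero_apply, and_assoc]

lemma gaps_eq_inter_sdiff_hull [Finite ι] (hx : LinearIndependent ℝ x) :
    gaps x = (Submodule.span ℤ (Set.range x) : Set (ι → ℝ)) ∩
      (Set.Ici 0 \ PointedCone.hull ℝ (Set.range x)) := by
  rw [gaps, span_nat_eq_span_int_inter_hull hx]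
  grind

theorem isBigO_ncard_gaps_sub [Fintype ι] [DecidableEq ι] {D : Set (ι → ℝ)}
    (hx : LinearIndependent ℝ x) (hx0 : ∀ i, 0 ≤ x i) (hD : Convex ℝ D) (hDb : IsBounded D)
    (hD0 : D ∈ 𝓝 0) :
    (fun t : ℝ => (gaps x ∩ t • D).ncard -
      (volume.real (Set.Ici 0 ∩ D) - volume.real (PointedCone.hull ℝ (Set.range x) ∩ D)) /
        |(Matrix.of x).det| * t ^ Fintype.card ι) =O[atTop]
      fun t => t ^ (Fintype.card ι - 1) := by
  obtain ⟨b, rfl⟩ : ∃ b : Basis ι ℝ (ι → ℝ), ⇑b = x :=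
    ⟨_, coe_basisOfPiSpaceOfLinearIndependent hx⟩
  have hvol : volume.real (ZSpan.fundamentalDomain b) = |(Matrix.of b).det| := by
    simp [measureReal_def, ZSpan.volume_fundamentalDomain]
  have : Countable (Submodule.span ℤ (Set.range b)).toAddSubgroup :=
    inferInstanceAs (Countable (Submodule.span ℤ (Set.range b)))
  have hcount := isBigO_ncard_cone_sdiff_sub (K₁ := PointedCone.hull ℝ (Set.range b))
    (K₂ := PointedCone.positive ℝ (ι → ℝ)) (ZSpan.isAddFundamentalDomain' b volume)
    (ZSpan.fundamentalDomain_isBounded b) (hull_range_le_positive hx0)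
    (interior_hull_range_basis_nonempty b) hD hDb hD0
  simpa only [hvol, finrank_fintype_fun_eq_card, gaps_eq_inter_sdiff_hull hx,
    Set.inter_assoc] using! hcount

end Gaps

/-- Let `L ⊂ ℝ^d` be a full-rank lattice and `X = {x_1,…,x_d}` a positive basis for `L`.
Then, as `t → ∞`, the number of gaps of `S(X)` in `L⁺` of Euclidean norm at most `t`
equals `(ω_d (1 − ν(X) 2^d) / (2^d det L)) t^d + O(t^{d−1})`, where `ν(X)` is the
solid-angle measure of the cone `C(X)` spanned by `X` and `ω_d` the volume of the
Euclidean unit ball in `ℝ^d`. -/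
theorem count_gaps (d : ℕ) (hd : 0 < d) (x : Fin d → Fin d → ℝ)
    (hli : LinearIndependent ℝ x) (hpos : ∀ i j, 0 ≤ x i j) :
    let L : Set (Fin d → ℝ) := {v | ∃ a : Fin d → ℤ, v = ∑ i, (a i : ℝ) • x i}
    let S : Set (Fin d → ℝ) := {v | ∃ a : Fin d → ℕ, v = ∑ i, (a i : ℝ) • x i}
    let N : ℝ → ℕ := fun t =>
      Nat.card {y : Fin d → ℝ // (y ∈ L ∧ (∀ i, 0 ≤ y i) ∧ y ∉ S) ∧
        Real.sqrt (∑ i, y i ^ 2) ≤ t}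
    let ωd : ℝ := (volume {p : Fin d → ℝ | ∑ i, p i ^ 2 ≤ 1}).toReal
    let ν : ℝ := (volume ({p : Fin d → ℝ | ∃ c : Fin d → ℝ, (∀ i, 0 ≤ c i) ∧
        p = ∑ i, c i • x i} ∩ {p : Fin d → ℝ | ∑ i, p i ^ 2 ≤ 1})).toReal / ωd
    let detL : ℝ := |(Matrix.of fun k i => x i k).det|
    (fun t : ℝ => (N t : ℝ) - ωd * (1 - ν * 2 ^ d) / (2 ^ d * detL) * t ^ d) =O[atTop]
      fun t : ℝ => t ^ (d - 1) := by
  intro L S N ωd ν detL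
  have hdet : detL = |(Matrix.of x).det| := congrArg abs (Matrix.det_transpose (Matrix.of x))
  have hN {t : ℝ} (ht : 0 < t) : N t = (gaps x ∩ t • euclideanBall (Fin d)).ncard := by
    rw [← Nat.card_coe_set_eq]
    exact Nat.card_congr <| Equiv.subtypeEquivRight fun y =>
      and_congr mem_gaps_iff.symm (mem_smul_euclideanBall_iff ht).symm
  have hν : ν = volume.real (PointedCone.hull ℝ (Set.range x) ∩ euclideanBall (Fin d)) / ωd := by
    simp only [ν, ← mem_hull_range_iff]
    rfl
  have hω : ωd = 2 ^ d * volume.real (Set.Ici 0 ∩ euclideanBall (Fin d)) := by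
    simpa only [Fintype.card_fin] using!
      volume_real_eq_two_pow_mul_Ici_inter (ι := Fin d) signs_smul_euclideanBall
  have hω0 : ωd ≠ 0 := ENNReal.toReal_ne_zero.2
    ⟨(Measure.measure_pos_of_mem_nhds volume euclideanBall_mem_nhds_zero).ne',
      isBounded_euclideanBall.measure_lt_top.ne⟩
  have hcount := isBigO_ncard_gaps_sub hli hpos convex_euclideanBall isBounded_euclideanBall
    euclideanBall_mem_nhds_zero
  rw [← hdet, Fintype.card_fin] at hcount
  refine hcount.congr' ?_ .rfl
  filter_upwards [eventually_gt_atTop 0] with t ht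
  rw [hN ht, hν, mul_sub, mul_one, ← mul_assoc, mul_div_cancel₀ _ hω0, hω, mul_comm _ (2 ^ d),
    ← mul_sub, mul_div_mul_left _ _ (by positivity)]
end

section
/- Let K be a totally real number field of degree d and I ⊆ O_K a nonzero ideal. Then there exist Q-linearly independent elements s_1,...,s_d ∈ I such that ∏_{i=1}^d h(s_i) ≤ N_K(I)·√|Δ_K|, where h is the Weil height, N_K(I) the ideal norm, and Δ_K the discriminant of K. -/
open NumberField

/-- The denominator ideal `(𝒪_K : α) = {x ∈ 𝒪_K : xα ∈ 𝒪_K}` of `α ∈ K`; its absolute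
norm equals `∏_{v ∤ ∞} max(1,|α|_v)^{d_v}`. -/
noncomputable def denominatorIdeal {K : Type*} [Field K] [NumberField K] (α : K) :
    Ideal (𝓞 K) where
  carrier := {x : 𝓞 K | IsIntegral ℤ ((x : K) * α)}
  add_mem' := by
    intro a b ha hb
    simpa [add_mul] using ha.add hb
  zero_mem' := by simpa using isIntegral_zero
  smul_mem' := by
    intro c y hy
    have hc : IsIntegral ℤ ((c : K)) := RingOfIntegers.isIntegral_coe c
    simpa [smul_eq_mul, mul_assoc] using hc.mul hy

/-- The absolute Weil height of `α ∈ K`, for a totally real number field `K` of degree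
`d` with real embeddings `σ_1,…,σ_d`:
`h(α) = (N(denominator ideal of α) · ∏_i max(1,|σ_i α|))^{1/d}`, which agrees with
`∏_{v ∈ M(K)} max(1,|α|_v)^{d_v/d}`. -/
noncomputable def weilHeight {K : Type*} [Field K] [NumberField K]
    (σ : Fin (Module.finrank ℚ K) → (K →+* ℝ)) (α : K) : ℝ :=
  ((Ideal.absNorm (denominatorIdeal α) : ℝ) * ∏ i, max 1 |σ i α|) ^
    ((Module.finrank ℚ K : ℝ)⁻¹)

/-!
Embed `K` in Euclidean space `ℝᵈ` by its real embeddings; the ideal `I` becomes a lattice of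
covolume `N(I) √|Δ|`, and `s₁, …, s_d` are taken to attain its successive minima for the Euclidean
norm. Minkowski's second theorem for this norm is elementary: in Gram–Schmidt coordinates for the
`sᵢ`, the open ellipsoid with semi-axes `‖sᵢ‖` contains no nonzero lattice vector, since a vector
whose last nonzero coordinate is the `k`-th is at least as long as `s_k`. Hence
`∏ ‖sᵢ‖ · vol(ball) ≤ 2ᵈ N(I) √|Δ|` by the convex body theorem.

A nonzero integer `x` has denominator ideal `⊤`, and its conjugates `xᵢ` satisfy `∏ |xᵢ| ≥ 1`.
Therefore some `|x_k| ≥ 1`, so that `∑ max(1, |xᵢ|)² ≤ ‖x‖² + d - 1`, and `d ≤ ‖x‖²` by AM–GM.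
A second application of AM–GM gives `h(x)² ≤ (2 - 1 / d) / d · ‖x‖²`. This constant is small enough
for the theorem, because `(2 √((2 - 1 / d) / d))ᵈ ≤ vol(ball)`, with equality for `d = 1`.
-/

section InitialSegments

variable {α : Type*} {n : ℕ}

lemma image_Iio_castSucc (v : Fin (n + 1) → α) (i : Fin n) :
    v '' Set.Iio i.castSucc = Fin.init v '' Set.Iio i := by
  rw [← Fin.image_castSucc_Iio, Set.image_image]
  rfl

lemma image_Iio_last (v : Fin (n + 1) → α) :
    v '' Set.Iio (Fin.last n) = Set.range (Fin.init v) := by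
  have hIio : Set.Iio (Fin.last n) = Set.range Fin.castSucc := by
    ext i
    simp [Fin.range_castSucc, Fin.lt_def]
  rw [hIio, ← Set.range_comp]
  rfl

lemma linearIndependent_of_notMem_span_image_Iio {𝕜 V : Type*} [DivisionRing 𝕜] [AddCommGroup V]
    [Module 𝕜 V] {v : Fin n → V} (hv : ∀ i, v i ∉ Submodule.span 𝕜 (v '' Set.Iio i)) :
    LinearIndependent 𝕜 v := by
  induction n with
  | zero => exact linearIndependent_empty_type
  | succ n ih =>
    refine linearIndependent_finSucc'.mpr ⟨ih fun i => ?_, ?_⟩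
    · rw [← image_Iio_castSucc]
      exact hv i.castSucc
    · rw [← image_Iio_last]
      exact hv (Fin.last n)

end InitialSegments

section SuccessiveMinima

variable {E : Type*} [NormedAddCommGroup E] [NormedSpace ℝ E] {L : Submodule ℤ E} {n : ℕ}

/-- The vectors `s 0, …, s (n - 1)` attain the first `n` successive minima of the norm on `L`:
each `s i` is a shortest vector of `L` outside the real span of the preceding ones. -/
structure AttainsSuccessiveMinima (L : Submodule ℤ E) (s : Fin n → E) : Prop where
  mem (i : Fin n) : s i ∈ L
  notMem_span (i : Fin n) : s i ∉ Submodule.span ℝ (s '' Set.Iio i)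
  norm_le {i : Fin n} {v : E} (hv : v ∈ L) (hvs : v ∉ Submodule.span ℝ (s '' Set.Iio i)) :
    ‖s i‖ ≤ ‖v‖

namespace AttainsSuccessiveMinima

variable {s : Fin n → E}

lemma monotone_norm (hs : AttainsSuccessiveMinima L s) : Monotone fun i => ‖s i‖ :=
  fun _ j hij => hs.norm_le (hs.mem j) fun hj =>
    hs.notMem_span j (Submodule.span_mono (Set.image_mono (Set.Iio_subset_Iio hij)) hj)

lemma snoc (hs : AttainsSuccessiveMinima L s) {w : E} (hw : w ∈ L)
    (hws : w ∉ Submodule.span ℝ (Set.range s))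
    (hmin : ∀ v ∈ L, v ∉ Submodule.span ℝ (Set.range s) → ‖w‖ ≤ ‖v‖) :
    AttainsSuccessiveMinima L (Fin.snoc s w : Fin (n + 1) → E) := by
  have himage (i : Fin n) :
      (Fin.snoc s w : Fin (n + 1) → E) '' Set.Iio i.castSucc = s '' Set.Iio i := by
    rw [image_Iio_castSucc, Fin.init_snoc]
  have hlast : (Fin.snoc s w : Fin (n + 1) → E) '' Set.Iio (Fin.last n) = Set.range s := by
    rw [image_Iio_last, Fin.init_snoc]
  refine ⟨fun i => ?_, fun i => ?_, fun {i} v hv hvs => ?_⟩ <;> induction i using Fin.lastCases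
  case refine_1.last => simpa using hw
  case refine_1.cast i => simpa using hs.mem i
  case refine_2.last => simpa [hlast] using hws
  case refine_2.cast i => simpa [himage] using hs.notMem_span i
  case refine_3.last => simpa using hmin v hv (hlast ▸ hvs)
  case refine_3.cast i => simpa using hs.norm_le hv (himage i ▸ hvs)

lemma linearIndependent (hs : AttainsSuccessiveMinima L s) : LinearIndependent ℝ s :=
  linearIndependent_of_notMem_span_image_Iio hs.notMem_span

lemma norm_pos (hs : AttainsSuccessiveMinima L s) (i : Fin n) : 0 < ‖s i‖ :=
  norm_pos_iff.mpr (hs.linearIndependent.ne_zero i)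

end AttainsSuccessiveMinima

variable [FiniteDimensional ℝ E]

lemma exists_norm_le_of_notMem (L : Submodule ℤ E) [DiscreteTopology L] [IsZLattice ℝ L]
    {W : Submodule ℝ E} (hW : W ≠ ⊤) :
    ∃ w ∈ L, w ∉ W ∧ ∀ v ∈ L, v ∉ W → ‖w‖ ≤ ‖v‖ := by
  obtain ⟨u, hu, huW⟩ : ∃ u ∈ L, u ∉ W := by
    by_contra! h
    exact hW (top_le_iff.mp (IsZLattice.span_top (K := ℝ) (L := L) ▸ Submodule.span_le.mpr h))
  have hfinite : (Metric.closedBall (0 : E) ‖u‖ ∩ L).Finite :=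
    Metric.finite_isBounded_inter_isClosed DiscreteTopology.isDiscrete Metric.isBounded_closedBall
      (AddSubgroup.isClosed_of_discrete (H := L.toAddSubgroup))
  obtain ⟨w, ⟨⟨-, hwL⟩, hwW⟩, hmin⟩ := Set.exists_min_image _ norm
    (hfinite.subset (Set.sep_subset _ (· ∉ W))) ⟨u, ⟨by simp, hu⟩, huW⟩
  refine ⟨w, hwL, hwW, fun v hv hvW => ?_⟩
  rcases le_total ‖v‖ ‖u‖ with hvu | huv
  · exact hmin v ⟨⟨by simpa using hvu, hv⟩, hvW⟩
  · exact (hmin u ⟨⟨by simp, hu⟩, huW⟩).trans huv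

theorem exists_attainsSuccessiveMinima (L : Submodule ℤ E) [DiscreteTopology L] [IsZLattice ℝ L]
    (hn : n ≤ Module.finrank ℝ E) :
    ∃ s : Fin n → E, AttainsSuccessiveMinima L s := by
  induction n with
  | zero => exact ⟨Fin.elim0, Fin.rec0, Fin.rec0, fun {i} => i.elim0⟩
  | succ n ih =>
    obtain ⟨s, hs⟩ := ih (by omega)
    have hspan : Submodule.span ℝ (Set.range s) ≠ ⊤ := by
      intro h
      have hle := finrank_range_le_card (R := ℝ) s
      rw [Set.finrank, h, finrank_top, Fintype.card_fin] at hle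
      omega
    obtain ⟨w, hwL, hws, hmin⟩ := exists_norm_le_of_notMem L hspan
    exact ⟨_, hs.snoc hwL hws hmin⟩

end SuccessiveMinima

section ConvexBody

variable {E : Type*} [NormedAddCommGroup E] [NormedSpace ℝ E] [FiniteDimensional ℝ E]
  [MeasurableSpace E] [BorelSpace E]

lemma measureReal_ball_le_of_forall_one_le_norm (L : Submodule ℤ E) [DiscreteTopology L]
    [IsZLattice ℝ L] (μ : MeasureTheory.Measure E) [μ.IsAddHaarMeasure] {T : E →ₗ[ℝ] E}
    (hT : LinearMap.det T ≠ 0) (hTL : ∀ w ∈ L, w ≠ 0 → 1 ≤ ‖T w‖) :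
    |LinearMap.det T|⁻¹ * μ.real (Metric.ball 0 1) ≤
      2 ^ Module.finrank ℝ E * ZLattice.covolume L μ := by
  let F := ZSpan.fundamentalDomain ((Module.Free.chooseBasis ℤ L).ofZLatticeBasis ℝ)
  have hF : MeasureTheory.IsAddFundamentalDomain L.toAddSubgroup F μ :=
    ZLattice.isAddFundamentalDomain (Module.Free.chooseBasis ℤ L) μ
  have hFμ : μ F ≠ ⊤ := (ZSpan.fundamentalDomain_isBounded _).measure_lt_top.ne
  have : Countable L.toAddSubgroup := inferInstanceAs (Countable L)
  contrapose! hTL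
  obtain ⟨w, hw0, hw⟩ :=
    MeasureTheory.exists_ne_zero_mem_lattice_of_measure_mul_two_pow_lt_measure (μ := μ)
      (s := T ⁻¹' Metric.ball 0 1) hF (fun x hx => by simpa using hx)
      ((convex_ball _ _).linear_preimage T) (by
        rw [μ.addHaar_preimage_linearMap hT, ← ENNReal.toReal_lt_toReal (by finiteness)
          (by finiteness)]
        rw [ZLattice.covolume_eq_measure_fundamentalDomain L μ hF, mul_comm] at hTL
        simpa [MeasureTheory.measureReal_def, abs_inv] using hTL)
  exact ⟨w, w.2, by simpa using hw0, by simpa using hw⟩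

end ConvexBody

section MinkowskiSecond

/-- The endomorphism multiplying the `i`-th coordinate with respect to the basis `e` by `c i`. -/
noncomputable def diagonalScaling {ι R M : Type*} [Fintype ι] [DecidableEq ι] [CommRing R]
    [AddCommGroup M] [Module R M] (e : Module.Basis ι R M) (c : ι → R) : M →ₗ[R] M :=
  Matrix.toLin e e (Matrix.diagonal c)

section DiagonalScaling

variable {ι R M : Type*} [Fintype ι] [DecidableEq ι] [CommRing R] [AddCommGroup M] [Module R M]

lemma det_diagonalScaling (e : Module.Basis ι R M) (c : ι → R) :
    LinearMap.det (diagonalScaling e c) = ∏ i, c i := by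
  simp [diagonalScaling, LinearMap.det_toLin]

lemma repr_diagonalScaling (e : Module.Basis ι R M) (c : ι → R) (v : M) (i : ι) :
    e.repr (diagonalScaling e c v) i = c i * e.repr v i := by
  rw [diagonalScaling, Matrix.repr_toLin, Matrix.mulVec_diagonal]

end DiagonalScaling

variable {n : ℕ} {E : Type*} [NormedAddCommGroup E] [InnerProductSpace ℝ E]

lemma le_norm_diagonalScaling {ι : Type*} [Fintype ι] [DecidableEq ι]
    (e : OrthonormalBasis ι ℝ E) {c : ι → ℝ} {a : ℝ} (ha : 0 ≤ a) {v : E}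
    (h : ∀ i, e.repr v i ≠ 0 → a ≤ c i) : a * ‖v‖ ≤ ‖diagonalScaling e.toBasis c v‖ := by
  rw [← Real.norm_of_nonneg ha, ← norm_smul, ← e.repr.norm_map, ← e.repr.norm_map,
    EuclideanSpace.norm_eq, EuclideanSpace.norm_eq]
  gcongr with i
  rw [← e.coe_toBasis_repr_apply (diagonalScaling _ _ _), repr_diagonalScaling,
    e.coe_toBasis_repr_apply]
  rcases eq_or_ne (e.repr v i) 0 with hi | hi
  · simp [hi]
  · simp only [map_smul, PiLp.smul_apply, norm_smul, norm_mul, Real.norm_eq_abs, abs_of_nonneg ha]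
    gcongr
    exact (h i hi).trans (le_abs_self _)

variable [FiniteDimensional ℝ E]

lemma inner_gramSchmidtOrthonormalBasis_eq_zero {ι : Type*} [LinearOrder ι]
    [LocallyFiniteOrderBot ι] [WellFoundedLT ι] [Fintype ι]
    (hn : Module.finrank ℝ E = Fintype.card ι) (s : ι → E) {k : ι} {w : E}
    (hw : w ∈ Submodule.span ℝ (s '' Set.Iio k)) :
    inner ℝ (InnerProductSpace.gramSchmidtOrthonormalBasis hn s k) w = 0 := by
  suffices h : Submodule.span ℝ (s '' Set.Iio k) ≤
      (innerₛₗ ℝ (InnerProductSpace.gramSchmidtOrthonormalBasis hn s k)).ker from h hw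
  rw [Submodule.span_le, Set.image_subset_iff]
  intro i hi
  exact InnerProductSpace.gramSchmidtOrthonormalBasis_inv_triangular hn s hi

namespace AttainsSuccessiveMinima

variable {L : Submodule ℤ E} {s : Fin n → E}

lemma one_le_norm_diagonalScaling (hs : AttainsSuccessiveMinima L s)
    (hn : Module.finrank ℝ E = Fintype.card (Fin n)) {w : E} (hw : w ∈ L) (hw0 : w ≠ 0) :
    1 ≤ ‖diagonalScaling (InnerProductSpace.gramSchmidtOrthonormalBasis hn s).toBasis
      (fun i => ‖s i‖⁻¹) w‖ := by
  set e := InnerProductSpace.gramSchmidtOrthonormalBasis hn s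
  obtain ⟨k, hk, hkmax⟩ : ∃ k, e.repr w k ≠ 0 ∧ ∀ i, e.repr w i ≠ 0 → i ≤ k := by
    obtain ⟨i, hi⟩ : ∃ i, e.repr w i ≠ 0 := by
      by_contra! h
      exact hw0 (e.repr.map_eq_zero_iff.mp (PiLp.ext h))
    exact Set.exists_max_image {i | e.repr w i ≠ 0} id (Set.toFinite _) ⟨i, hi⟩
  have hkw : ‖s k‖ ≤ ‖w‖ := hs.norm_le hw fun hspan =>
    hk (by rw [e.repr_apply_apply, inner_gramSchmidtOrthonormalBasis_eq_zero hn s hspan])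
  calc 1 ≤ ‖s k‖⁻¹ * ‖w‖ := by rwa [le_inv_mul_iff₀ (hs.norm_pos k), mul_one]
    _ ≤ _ := le_norm_diagonalScaling e (by positivity) fun i hi =>
      inv_anti₀ (hs.norm_pos i) (hs.monotone_norm (hkmax i hi))

/-- Minkowski's second theorem for the Euclidean norm. -/
theorem prod_norm_mul_measureReal_ball_le [MeasurableSpace E] [BorelSpace E]
    [DiscreteTopology L] [IsZLattice ℝ L] (hs : AttainsSuccessiveMinima L s)
    (hn : Module.finrank ℝ E = n) (μ : MeasureTheory.Measure E) [μ.IsAddHaarMeasure] :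
    (∏ i, ‖s i‖) * μ.real (Metric.ball 0 1) ≤ 2 ^ n * ZLattice.covolume L μ := by
  have hcard : Module.finrank ℝ E = Fintype.card (Fin n) := by rw [hn, Fintype.card_fin]
  have hpos : 0 < ∏ i, ‖s i‖ := Finset.prod_pos fun i _ => hs.norm_pos i
  have hdet : LinearMap.det (diagonalScaling
      (InnerProductSpace.gramSchmidtOrthonormalBasis hcard s).toBasis fun i => ‖s i‖⁻¹) =
      (∏ i, ‖s i‖)⁻¹ := by
    rw [det_diagonalScaling, Finset.prod_inv_distrib]
  have h := measureReal_ball_le_of_forall_one_le_norm L μ (hdet ▸ inv_ne_zero hpos.ne')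
    fun w => hs.one_le_norm_diagonalScaling hcard
  rwa [hdet, abs_inv, inv_inv, abs_of_pos hpos, hn] at h

end AttainsSuccessiveMinima

end MinkowskiSecond

section UnitBallConstant

-- The constant `13 / 8` is pinned between `16 / π ^ 2`, which is needed for `n = 2`, and
-- `exp (1 / 2)`, the limit of `(1 - 1 / (2 * n)) ^ (-n)`.
lemma sixteen_le_mul_sq_pi : 16 ≤ 13 / 8 * Real.pi ^ 2 := by
  nlinarith [Real.pi_gt_d2]

lemma two_sub_inv_pow_le (n : ℕ) (hn : n ≠ 0) : (2 - 1 / n : ℝ) ^ n ≤ 8 / 13 * 2 ^ n := by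
  have hhalf : (1 - 2⁻¹ / n : ℝ) ^ n ≤ 8 / 13 := by
    have hexp : 13 / 8 ≤ Real.exp 2⁻¹ := by
      have := Real.quadratic_le_exp_of_nonneg (x := 2⁻¹) (by norm_num)
      norm_num at this ⊢
      exact this
    calc (1 - 2⁻¹ / n : ℝ) ^ n ≤ Real.exp (-2⁻¹) :=
          Real.one_sub_div_pow_le_exp_neg ((by norm_num : (2⁻¹ : ℝ) ≤ 1).trans
            (by exact_mod_cast Nat.one_le_iff_ne_zero.mpr hn))
      _ ≤ 8 / 13 := by
        rw [Real.exp_neg]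
        exact (inv_anti₀ (by norm_num) hexp).trans (by norm_num)
  calc (2 - 1 / n : ℝ) ^ n = (1 - 2⁻¹ / n) ^ n * 2 ^ n := by rw [← mul_pow]; ring
    _ ≤ 8 / 13 * 2 ^ n := by gcongr

lemma three_mul_pow_self_le (n : ℕ) (hn : n ≠ 0) : 3 * (n : ℝ) ^ n ≤ (n + 2) ^ n := by
  have hn' : (0 : ℝ) < n := by positivity
  have hbernoulli : 3 ≤ (1 + 2 / (n : ℝ)) ^ n := by
    have := one_add_mul_le_pow (a := 2 / (n : ℝ)) (by linarith [div_pos two_pos hn']) n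
    rw [mul_div_cancel₀ _ hn'.ne'] at this
    linarith
  calc 3 * (n : ℝ) ^ n ≤ (1 + 2 / n) ^ n * n ^ n := by gcongr
    _ = (n + 2) ^ n := by rw [← mul_pow, add_mul, one_mul, div_mul_cancel₀ _ hn'.ne']

lemma Gamma_half_add_two_add_one (n : ℕ) :
    Real.Gamma ((n + 2 : ℕ) / 2 + 1) = (n / 2 + 1) * Real.Gamma (n / 2 + 1) := by
  rw [← Real.Gamma_add_one (by positivity)]
  push_cast
  ring_nf

lemma eight_pow_mul_sq_Gamma_le : ∀ {n : ℕ}, 2 ≤ n →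
    8 ^ n * Real.Gamma (n / 2 + 1) ^ 2 ≤ 13 / 8 * (Real.pi * n) ^ n
  | 2, _ => by
    have hGamma : Real.Gamma ((2 : ℕ) / 2 + 1) = 1 := by
      simpa using Gamma_half_add_two_add_one 0
    rw [hGamma]
    norm_num
    nlinarith [sixteen_le_mul_sq_pi]
  | 3, _ => by
    have hGamma : Real.Gamma ((3 : ℕ) / 2 + 1) = 3 / 4 * √Real.pi := by
      rw [Gamma_half_add_two_add_one 1, Real.Gamma_add_one (by norm_num), Nat.cast_one,
        Real.Gamma_one_half_eq]
      ring
    rw [hGamma, mul_pow _ (√_), Real.sq_sqrt Real.pi_pos.le]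
    norm_num
    nlinarith [sixteen_le_mul_sq_pi, Real.pi_pos]
  | n + 4, _ => by
    set m := n + 2
    calc (8 : ℝ) ^ (m + 2) * Real.Gamma ((m + 2 : ℕ) / 2 + 1) ^ 2
        = 16 * (m + 2) ^ 2 * (8 ^ m * Real.Gamma (m / 2 + 1) ^ 2) := by
          rw [Gamma_half_add_two_add_one]
          ring
      _ ≤ 16 * (m + 2) ^ 2 * (13 / 8 * (Real.pi * m) ^ m) := by
          gcongr ?_ * ?_
          exact eight_pow_mul_sq_Gamma_le (by omega)
      _ = 16 / 3 * (m + 2) ^ 2 * (13 / 8) * Real.pi ^ m * (3 * m ^ m) := by ring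
      _ ≤ Real.pi ^ 2 * (m + 2) ^ 2 * (13 / 8) * Real.pi ^ m * (m + 2) ^ m := by
          gcongr
          · nlinarith [sixteen_le_mul_sq_pi]
          · exact three_mul_pow_self_le m (by omega)
      _ = 13 / 8 * (Real.pi * (m + 2 : ℕ)) ^ (m + 2) := by
          push_cast
          rw [mul_pow]
          ring

lemma four_mul_two_sub_inv_pow_mul_sq_Gamma_le (n : ℕ) (hn : n ≠ 0) :
    (4 * (2 - 1 / n) : ℝ) ^ n * Real.Gamma (n / 2 + 1) ^ 2 ≤ (Real.pi * n) ^ n := by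
  obtain rfl | hn2 : n = 1 ∨ 2 ≤ n := by omega
  · rw [Nat.cast_one, Real.Gamma_add_one (by norm_num), Real.Gamma_one_half_eq, mul_pow _ (√_),
      Real.sq_sqrt Real.pi_pos.le]
    linarith
  · calc (4 * (2 - 1 / n) : ℝ) ^ n * Real.Gamma (n / 2 + 1) ^ 2
        = 4 ^ n * (2 - 1 / n) ^ n * Real.Gamma (n / 2 + 1) ^ 2 := by rw [mul_pow]
      _ ≤ 4 ^ n * (8 / 13 * 2 ^ n) * Real.Gamma (n / 2 + 1) ^ 2 := by
          gcongr
          exact two_sub_inv_pow_le n hn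
      _ = 8 / 13 * (8 ^ n * Real.Gamma (n / 2 + 1) ^ 2) := by
          rw [show (8 : ℝ) = 4 * 2 by norm_num, mul_pow]
          ring
      _ ≤ 8 / 13 * (13 / 8 * (Real.pi * n) ^ n) := by
          gcongr ?_ * ?_
          exact eight_pow_mul_sq_Gamma_le hn2
      _ = (Real.pi * n) ^ n := by ring

lemma two_mul_sqrt_pow_le_measureReal_ball {E : Type*} [NormedAddCommGroup E]
    [InnerProductSpace ℝ E] [FiniteDimensional ℝ E] [MeasurableSpace E] [BorelSpace E] {n : ℕ}
    (hE : Module.finrank ℝ E = n) (hn : n ≠ 0) :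
    (2 * √((2 - 1 / n) / n)) ^ n ≤ MeasureTheory.volume.real (Metric.ball (0 : E) 1) := by
  have : Nontrivial E := Module.nontrivial_of_finrank_pos (hE ▸ hn.pos)
  have hinv : 1 / (n : ℝ) ≤ 1 := by
    rw [one_div]
    exact Nat.cast_inv_le_one n
  have : 0 < Real.Gamma ((n : ℝ) / 2 + 1) := Real.Gamma_pos_of_pos (by positivity)
  have hsq : (2 * √((2 - 1 / n) / n)) ^ 2 = 4 * (2 - 1 / n : ℝ) / n := by
    rw [mul_pow, Real.sq_sqrt (div_nonneg (by linarith) n.cast_nonneg)]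
    ring
  rw [MeasureTheory.measureReal_def, InnerProductSpace.volume_ball, hE, ENNReal.ofReal_one,
    one_pow, one_mul, ENNReal.toReal_ofReal (by positivity)]
  refine le_of_sq_le_sq ?_ (by positivity)
  rw [pow_right_comm, hsq, div_pow, div_pow, pow_right_comm, Real.sq_sqrt Real.pi_pos.le,
    div_le_div_iff₀ (by positivity) (by positivity), ← mul_pow Real.pi]
  exact four_mul_two_sub_inv_pow_mul_sq_Gamma_le n hn

theorem AttainsSuccessiveMinima.prod_sqrt_mul_norm_le_covolume {E : Type*} [NormedAddCommGroup E]
    [InnerProductSpace ℝ E] [FiniteDimensional ℝ E] [MeasurableSpace E] [BorelSpace E]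
    {L : Submodule ℤ E} [DiscreteTopology L] [IsZLattice ℝ L] {n : ℕ} {s : Fin n → E}
    (hs : AttainsSuccessiveMinima L s) (hE : Module.finrank ℝ E = n) (hn : n ≠ 0) :
    ∏ i, (√((2 - 1 / n) / n) * ‖s i‖) ≤ ZLattice.covolume L := by
  refine le_of_mul_le_mul_left ?_ (pow_pos two_pos n)
  calc 2 ^ n * ∏ i, (√((2 - 1 / n) / n) * ‖s i‖)
      = (∏ i, ‖s i‖) * (2 * √((2 - 1 / n) / n)) ^ n := by
        rw [Finset.prod_mul_distrib, Finset.prod_const, Finset.card_univ, Fintype.card_fin]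
        ring
    _ ≤ (∏ i, ‖s i‖) * MeasureTheory.volume.real (Metric.ball (0 : E) 1) := by
        gcongr
        exact two_mul_sqrt_pow_le_measureReal_ball hE hn
    _ ≤ 2 ^ n * ZLattice.covolume L MeasureTheory.volume :=
        hs.prod_norm_mul_measureReal_ball_le hE _

end UnitBallConstant

section GeometricMean

variable {ι : Type*} [Fintype ι] [Nonempty ι]

lemma prod_rpow_inv_card_le_sum_div_card {z : ι → ℝ} (hz : ∀ i, 0 ≤ z i) :
    (∏ i, z i) ^ (Fintype.card ι : ℝ)⁻¹ ≤ (∑ i, z i) / Fintype.card ι := by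
  simpa using Real.geom_mean_le_arith_mean Finset.univ (fun _ => 1) z (fun _ _ => zero_le_one)
    (by simp [Fintype.card_pos]) fun i _ => hz i

lemma card_le_norm_sq_of_one_le_prod_abs {v : EuclideanSpace ℝ ι} (hv : 1 ≤ ∏ i, |v i|) :
    (Fintype.card ι : ℝ) ≤ ‖v‖ ^ 2 := by
  have hgeom : 1 ≤ (∏ i, |v i| ^ 2) ^ (Fintype.card ι : ℝ)⁻¹ := by
    rw [Finset.prod_pow]
    exact Real.one_le_rpow (one_le_pow₀ hv) (by positivity)
  have hmean := hgeom.trans (prod_rpow_inv_card_le_sum_div_card fun i => sq_nonneg |v i|)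
  simpa only [one_le_div (Nat.cast_pos.mpr Fintype.card_pos : (0 : ℝ) < _), sq_abs,
    ← EuclideanSpace.real_norm_sq_eq] using hmean

lemma exists_one_le_of_one_le_prod {f : ι → ℝ} (hf : ∀ i, 0 ≤ f i) (h : 1 ≤ ∏ i, f i) :
    ∃ k, 1 ≤ f k := by
  classical
  obtain ⟨k⟩ := ‹Nonempty ι›
  by_contra! hlt
  refine h.not_gt ?_
  calc ∏ i, f i = f k * ∏ i ∈ Finset.univ.erase k, f i :=
        (Finset.mul_prod_erase _ f (Finset.mem_univ k)).symm
    _ ≤ f k * 1 := by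
        gcongr
        · exact hf k
        · exact Finset.prod_le_one (fun i _ => hf i) fun i _ => (hlt i).le
    _ < 1 := by rw [mul_one]; exact hlt k

lemma sum_max_one_sq_add_one_le {v : EuclideanSpace ℝ ι} (hv : 1 ≤ ∏ i, |v i|) :
    ∑ i, max 1 |v i| ^ 2 + 1 ≤ ‖v‖ ^ 2 + Fintype.card ι := by
  classical
  obtain ⟨k, hk⟩ := exists_one_le_of_one_le_prod (fun i => abs_nonneg (v i)) hv
  have hrest : ∑ i ∈ Finset.univ.erase k, max 1 |v i| ^ 2 ≤
      ∑ i ∈ Finset.univ.erase k, (|v i| ^ 2 + 1) := by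
    gcongr with i
    rcases max_cases 1 |v i| with ⟨h, -⟩ | ⟨h, -⟩ <;> rw [h] <;> nlinarith [sq_nonneg |v i|]
  calc ∑ i, max 1 |v i| ^ 2 + 1
      = (|v k| ^ 2 + 1) + ∑ i ∈ Finset.univ.erase k, max 1 |v i| ^ 2 := by
        rw [← Finset.add_sum_erase _ _ (Finset.mem_univ k), max_eq_right hk]
        ring
    _ ≤ (|v k| ^ 2 + 1) + ∑ i ∈ Finset.univ.erase k, (|v i| ^ 2 + 1) := by gcongr
    _ = ∑ i, (|v i| ^ 2 + 1) :=
        Finset.add_sum_erase _ (fun i => |v i| ^ 2 + 1) (Finset.mem_univ k)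
    _ = ‖v‖ ^ 2 + Fintype.card ι := by
        simp [Finset.sum_add_distrib, EuclideanSpace.norm_sq_eq]

theorem prod_max_one_rpow_inv_card_le {v : EuclideanSpace ℝ ι} (hv : 1 ≤ ∏ i, |v i|) :
    (∏ i, max 1 |v i|) ^ (Fintype.card ι : ℝ)⁻¹ ≤
      √((2 - 1 / Fintype.card ι) / Fintype.card ι) * ‖v‖ := by
  have hsum := sum_max_one_sq_add_one_le hv
  have hnorm := card_le_norm_sq_of_one_le_prod_abs hv
  have hmean := prod_rpow_inv_card_le_sum_div_card fun i => sq_nonneg (max 1 |v i|)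
  have hn : 1 ≤ (Fintype.card ι : ℝ) := by exact_mod_cast Fintype.card_pos (α := ι)
  generalize (Fintype.card ι : ℝ) = n at *
  have hprod : 0 ≤ ∏ i, max 1 |v i| := by positivity
  have hinv : 1 / n ≤ 1 := by rwa [div_le_one (by linarith)]
  refine le_of_sq_le_sq ?_ (by positivity)
  calc ((∏ i, max 1 |v i|) ^ n⁻¹) ^ 2
      = (∏ i, max 1 |v i| ^ 2) ^ n⁻¹ := by
        rw [Finset.prod_pow, ← Real.rpow_natCast_mul hprod, ← Real.rpow_mul_natCast hprod, mul_comm]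
    _ ≤ (∑ i, max 1 |v i| ^ 2) / n := hmean
    _ ≤ (‖v‖ ^ 2 + (1 - 1 / n) * n) / n := by
        gcongr
        rw [sub_mul, one_mul, one_div_mul_cancel (by positivity)]
        linarith
    _ ≤ (‖v‖ ^ 2 + (1 - 1 / n) * ‖v‖ ^ 2) / n := by
        gcongr
    _ = (√((2 - 1 / n) / n) * ‖v‖) ^ 2 := by
        rw [mul_pow, Real.sq_sqrt (div_nonneg (by linarith) (by linarith))]
        ring

end GeometricMean

section IdealDiscriminant

variable {K ι : Type*} [Field K] [NumberField K] [Fintype ι] [DecidableEq ι]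

lemma discr_intBasis (b : Module.Basis ι ℤ (𝓞 K)) :
    Algebra.discr ℚ (fun i => (b i : K)) = discr K := by
  rw [← discr_eq_discr K b, ← eq_intCast (algebraMap ℤ ℚ),
    ← Algebra.discr_localizationLocalization ℤ (nonZeroDivisors ℤ) (Rₘ := ℚ) K b]
  congr with i
  simp

lemma discr_ideal_basis {I : Ideal (𝓞 K)} (hI : I ≠ ⊥) (b : Module.Basis ι ℤ I) :
    Algebra.discr ℚ (fun i => ((b i : 𝓞 K) : K)) = (Ideal.absNorm I : ℚ) ^ 2 * discr K := by
  let b₀ : Module.Basis ι ℤ (𝓞 K) := (RingOfIntegers.basis K).reindex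
    ((Ideal.selfBasis (RingOfIntegers.basis K) I hI).indexEquiv b)
  let P : Matrix ι ι ℤ := b₀.toMatrix (Subtype.val ∘ b)
  have hP : P.det ^ 2 = (Ideal.absNorm I : ℤ) ^ 2 := by
    rw [← Ideal.natAbs_det_basis_change b₀ I b, Int.natAbs_sq, Module.Basis.det_apply]
  have hb : (fun i => ((b i : 𝓞 K) : K)) =
      Matrix.vecMul (fun i => (b₀ i : K))
        ((P.map (Int.castRingHom ℚ)).map (algebraMap ℚ K)) := by
    ext j
    have h := congrArg (algebraMap (𝓞 K) K) (b₀.sum_repr (b j : 𝓞 K))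
    simpa [P, Matrix.vecMul, dotProduct, Module.Basis.toMatrix_apply, mul_comm] using h.symm
  rw [hb, Algebra.discr_of_matrix_vecMul, discr_intBasis, ← RingHom.mapMatrix_apply,
    ← RingHom.map_det, eq_intCast]
  exact_mod_cast congrArg (· * (discr K : ℤ)) hP

end IdealDiscriminant

section RealEmbeddings

variable {K ι : Type*} [Field K] [NumberField K] [Fintype ι] {σ : ι → K →+* ℝ}

lemma bijective_ofRealHom_comp (hι : Fintype.card ι = Module.finrank ℚ K)
    (hσ : Function.Injective σ) :
    Function.Bijective fun i => (Complex.ofRealHom.comp (σ i)).toRatAlgHom := by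
  refine (Fintype.bijective_iff_injective_and_card _).mpr ⟨fun i j hij => hσ ?_, ?_⟩
  · ext x
    simpa using DFunLike.congr_fun hij x
  · rw [hι, AlgHom.card]

lemma norm_eq_prod_realEmbeddings (hι : Fintype.card ι = Module.finrank ℚ K)
    (hσ : Function.Injective σ) (x : K) : (Algebra.norm ℚ x : ℝ) = ∏ i, σ i x := by
  apply Complex.ofReal_injective
  have h := Algebra.norm_eq_prod_embeddings ℚ ℂ x
  rw [← (bijective_ofRealHom_comp hι hσ).prod_comp] at h
  simpa using h

lemma one_le_prod_abs_realEmbeddings (hι : Fintype.card ι = Module.finrank ℚ K)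
    (hσ : Function.Injective σ) {x : 𝓞 K} (hx : x ≠ 0) : 1 ≤ ∏ i, |σ i x| := by
  rw [← Finset.abs_prod, ← norm_eq_prod_realEmbeddings hι hσ, ← Algebra.coe_norm_int]
  exact_mod_cast Int.one_le_abs (Algebra.norm_ne_zero_iff.mpr hx)

lemma discr_eq_det_realEmbeddings_sq [DecidableEq ι] (hι : Fintype.card ι = Module.finrank ℚ K)
    (hσ : Function.Injective σ) (b : ι → K) :
    (Algebra.discr ℚ b : ℝ) = (Matrix.of fun i j => σ j (b i)).det ^ 2 := by
  apply Complex.ofReal_injective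
  have h := Algebra.discr_eq_det_embeddingsMatrixReindex_pow_two ℚ ℂ b
    (Equiv.ofBijective _ (bijective_ofRealHom_comp hι hσ))
  have hmatrix : Algebra.embeddingsMatrixReindex ℚ ℂ b
      (Equiv.ofBijective _ (bijective_ofRealHom_comp hι hσ)) =
        Complex.ofRealHom.mapMatrix (Matrix.of fun i j => σ j (b i)) := by
    ext i j
    simp [Algebra.embeddingsMatrixReindex, Algebra.embeddingsMatrix]
  rw [hmatrix, ← RingHom.map_det] at h
  simpa using h

end RealEmbeddings

lemma covolume_span_range_basis {ι : Type*} [Fintype ι] [DecidableEq ι]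
    (b : Module.Basis ι ℝ (EuclideanSpace ℝ ι)) :
    ZLattice.covolume (Submodule.span ℤ (Set.range b)) =
      |(Matrix.of fun i j => b i j).det| := by
  let e := EuclideanSpace.basisFun ι ℝ
  have hdet : e.toBasis.det b = (Matrix.of fun i j => b i j).det := by
    rw [Module.Basis.det_apply, ← Matrix.det_transpose]
    rfl
  have hvolume : MeasureTheory.volume.real (ZSpan.fundamentalDomain e.toBasis) = 1 := by
    rw [MeasureTheory.measureReal_congr (ZSpan.fundamentalDomain_ae_parallelepiped _ _),
      e.coe_toBasis, MeasureTheory.measureReal_def, e.volume_parallelepiped, ENNReal.toReal_one]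
  rw [ZLattice.covolume_eq_det_mul_measureReal _ _ (b.restrictScalars ℤ) e.toBasis, hvolume,
    mul_one, ← hdet]
  simp only [Function.comp_def, Module.Basis.restrictScalars_apply]

section IdealLattice

variable {ι K : Type*} [Field K] [NumberField K] {σ : ι → K →+* ℝ} {I : Ideal (𝓞 K)}

/-- The map `x ↦ (σ i x)_i` from `K` to Euclidean space. -/
noncomputable def realEmbedding (σ : ι → K →+* ℝ) : K →ₗ[ℚ] EuclideanSpace ℝ ι where
  toFun x := WithLp.toLp 2 fun i => σ i x
  map_add' x y := by ext i; simp
  map_smul' q x := by ext i; simp [Rat.smul_def]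

lemma realEmbedding_apply (σ : ι → K →+* ℝ) (x : K) (i : ι) : realEmbedding σ x i = σ i x := rfl

/-- The image of the ideal `I` under `realEmbedding σ`. -/
noncomputable def idealLattice (σ : ι → K →+* ℝ) (I : Ideal (𝓞 K)) :
    Submodule ℤ (EuclideanSpace ℝ ι) :=
  (I.restrictScalars ℤ).map
    ((realEmbedding σ).restrictScalars ℤ ∘ₗ (Algebra.linearMap (𝓞 K) K).restrictScalars ℤ)

lemma mem_idealLattice {v : EuclideanSpace ℝ ι} :
    v ∈ idealLattice σ I ↔ ∃ x ∈ I, realEmbedding σ x = v := Iff.rfl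

lemma idealLattice_eq_span_range {κ : Type*} (b : Module.Basis κ ℤ I) :
    idealLattice σ I = Submodule.span ℤ (Set.range fun i => realEmbedding σ (b i : 𝓞 K)) := by
  have hI : I.restrictScalars ℤ = Submodule.span ℤ (Set.range fun i => (b i : 𝓞 K)) := by
    have h := Submodule.map_span ((Submodule.subtype I).restrictScalars ℤ) (Set.range b)
    rw [b.span_eq, ← Set.range_comp] at h
    rwa [Submodule.map_top, LinearMap.range_restrictScalars, Submodule.range_subtype] at h
  rw [idealLattice, hI, Submodule.map_span, ← Set.range_comp]
  rfl

variable [Fintype ι]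

lemma exists_basis_span_eq_idealLattice [DecidableEq ι]
    (hι : Fintype.card ι = Module.finrank ℚ K) (hσ : Function.Injective σ) (hI : I ≠ ⊥) :
    ∃ b : Module.Basis ι ℝ (EuclideanSpace ℝ ι),
      Submodule.span ℤ (Set.range b) = idealLattice σ I ∧
      (Matrix.of fun i j => b i j).det ^ 2 = (Ideal.absNorm I : ℝ) ^ 2 * discr K := by
  have hcard : Fintype.card (Module.Free.ChooseBasisIndex ℤ (𝓞 K)) = Fintype.card ι := by
    rw [hι, ← RingOfIntegers.rank, Module.finrank_eq_card_chooseBasisIndex]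
  let bI : Module.Basis ι ℤ I := (Ideal.selfBasis (RingOfIntegers.basis K) I hI).reindex
    (Fintype.equivOfCardEq hcard)
  have hdet : (Matrix.of fun i j => σ j (bI i : 𝓞 K)).det ^ 2 =
      (Ideal.absNorm I : ℝ) ^ 2 * discr K := by
    rw [← discr_eq_det_realEmbeddings_sq hι hσ, discr_ideal_basis hI]
    push_cast
    rfl
  have hdet0 : (Matrix.of fun i j => σ j (bI i : 𝓞 K)).det ≠ 0 := by
    rw [← pow_ne_zero_iff two_ne_zero, hdet]
    exact mul_ne_zero (pow_ne_zero 2 (Nat.cast_ne_zero.mpr (Ideal.absNorm_eq_zero_iff.not.mpr hI)))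
      (Int.cast_ne_zero.mpr (discr_ne_zero K))
  have hli : LinearIndependent ℝ fun i => realEmbedding σ (bI i : 𝓞 K) :=
    .of_comp (WithLp.linearEquiv 2 ℝ (ι → ℝ)).toLinearMap
      (Matrix.linearIndependent_rows_of_det_ne_zero hdet0)
  have : Nonempty ι := Fintype.card_pos_iff.mp (hι ▸ Module.finrank_pos)
  let b := basisOfLinearIndependentOfCardEqFinrank hli (finrank_euclideanSpace ..).symm
  have hb : ⇑b = fun i => realEmbedding σ (bI i : 𝓞 K) :=
    coe_basisOfLinearIndependentOfCardEqFinrank _ _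
  refine ⟨b, by rw [hb, idealLattice_eq_span_range bI], ?_⟩
  simpa only [hb, realEmbedding_apply] using hdet

lemma discreteTopology_idealLattice (hι : Fintype.card ι = Module.finrank ℚ K)
    (hσ : Function.Injective σ) (hI : I ≠ ⊥) : DiscreteTopology (idealLattice σ I) := by
  classical
  obtain ⟨b, hb, -⟩ := exists_basis_span_eq_idealLattice hι hσ hI
  exact hb ▸ inferInstance

lemma isZLattice_idealLattice [DiscreteTopology (idealLattice σ I)]
    (hι : Fintype.card ι = Module.finrank ℚ K) (hσ : Function.Injective σ) (hI : I ≠ ⊥) :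
    IsZLattice ℝ (idealLattice σ I) := by
  classical
  obtain ⟨b, hb, -⟩ := exists_basis_span_eq_idealLattice hι hσ hI
  exact ⟨hb ▸ IsZLattice.span_top⟩

theorem covolume_idealLattice (hι : Fintype.card ι = Module.finrank ℚ K)
    (hσ : Function.Injective σ) (hI : I ≠ ⊥) :
    ZLattice.covolume (idealLattice σ I) = Ideal.absNorm I * √|(discr K : ℝ)| := by
  classical
  obtain ⟨b, hb, hdet⟩ := exists_basis_span_eq_idealLattice hι hσ hI
  rw [← hb, covolume_span_range_basis, ← Real.sqrt_sq_eq_abs, ← abs_sq, hdet, abs_mul,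
    Real.sqrt_mul (abs_nonneg _), abs_sq, Real.sqrt_sq (Nat.cast_nonneg _)]

end IdealLattice

section WeilHeight

variable {K : Type*} [Field K] [NumberField K] {σ : Fin (Module.finrank ℚ K) → K →+* ℝ}

lemma denominatorIdeal_coe (x : 𝓞 K) : denominatorIdeal (x : K) = ⊤ :=
  (Ideal.eq_top_iff_one _).mpr (by
    change IsIntegral ℤ (((1 : 𝓞 K) : K) * x)
    simpa using RingOfIntegers.isIntegral_coe x)

lemma weilHeight_nonneg (σ : Fin (Module.finrank ℚ K) → K →+* ℝ) (x : K) : 0 ≤ weilHeight σ x := by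
  unfold weilHeight
  positivity

theorem weilHeight_le_mul_norm (hσ : Function.Injective σ) {x : 𝓞 K} (hx : x ≠ 0) :
    weilHeight σ x ≤ √((2 - 1 / Module.finrank ℚ K) / Module.finrank ℚ K) *
      ‖realEmbedding σ (x : K)‖ := by
  have : Nonempty (Fin (Module.finrank ℚ K)) := ⟨⟨0, Module.finrank_pos⟩⟩
  have h := prod_max_one_rpow_inv_card_le (v := realEmbedding σ (x : K))
    (one_le_prod_abs_realEmbeddings (Fintype.card_fin _) hσ hx)
  simpa [weilHeight, denominatorIdeal_coe, realEmbedding_apply] using h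

end WeilHeight

/-- Let `K` be a totally real number field of degree `d` with real embeddings
`σ_1,…,σ_d` and `I ⊆ 𝒪_K` a nonzero ideal. Then there exist `ℚ`-linearly independent
elements `s_1,…,s_d ∈ I` with `∏_i h(s_i) ≤ N_K(I)·√|Δ_K|`. -/
theorem ideal_successive_minima_height (K : Type*) [Field K] [NumberField K]
    (σ : Fin (Module.finrank ℚ K) → (K →+* ℝ)) (hσ : Function.Injective σ)
    (I : Ideal (𝓞 K)) (hI : I ≠ ⊥) :
    ∃ s : Fin (Module.finrank ℚ K) → 𝓞 K, (∀ i, s i ∈ I) ∧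
      LinearIndependent ℚ (fun i => (s i : K)) ∧
      ∏ i, weilHeight σ (s i : K) ≤
        (Ideal.absNorm I : ℝ) * Real.sqrt |(discr K : ℝ)| := by
  have hcard := Fintype.card_fin (Module.finrank ℚ K)
  have := discreteTopology_idealLattice hcard hσ hI
  have := isZLattice_idealLattice hcard hσ hI
  obtain ⟨t, ht⟩ := exists_attainsSuccessiveMinima (idealLattice σ I) finrank_euclideanSpace_fin.ge
  choose s hsI hst using fun i => mem_idealLattice.mp (ht.mem i)
  have hs0 (i) : s i ≠ 0 := fun h => ht.linearIndependent.ne_zero i (by simp [← hst, h])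
  refine ⟨s, hsI, .of_comp (realEmbedding σ) ?_, ?_⟩
  · simpa only [Function.comp_def, hst] using ht.linearIndependent.restrict_scalars' ℚ
  calc ∏ i, weilHeight σ (s i : K)
      ≤ ∏ i, (√((2 - 1 / Module.finrank ℚ K) / Module.finrank ℚ K) * ‖t i‖) := by
        gcongr with i
        · exact fun i _ => weilHeight_nonneg σ _
        · exact hst i ▸ weilHeight_le_mul_norm hσ (hs0 i)
    _ ≤ ZLattice.covolume (idealLattice σ I) :=
        ht.prod_sqrt_mul_norm_le_covolume finrank_euclideanSpace_fin Module.finrank_pos.ne'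
    _ = Ideal.absNorm I * √|(discr K : ℝ)| := covolume_idealLattice hcard hσ hI
end

section
/- Let K be a totally real number field of degree d, I ⊆ O_K a nonzero ideal, and L_I = Σ(I) ⊂ R^d its image under the Minkowski embedding Σ = (σ_1,...,σ_d). Then the Euclidean covering radius satisfies μ(L_I) ≤ (d^{3/2}/2)·N_K(I)·√|Δ_K|. -/
open NumberField

/-!
Measure points of the torus `E ⧸ L` by their distance to `0`. Along a path from `0` to `p` this
distance takes every value up to that of `p`, so points at distances `0, 2ρ, 4ρ, …` are
`2ρ`-separated modulo `L`. If the minimum of `L` is at least `2ρ` too, the balls of radius `ρ`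
around them pack into a fundamental domain, and comparing measures bounds the distance from `p`
to `L`.

In the mixed space with the sup norm, the nonzero vectors of the lattice of an ideal `I` have norm
at least `1`, because the product formula forces `1 ≤ w α` at some place `w`. With `ρ = 1 / 2` the
sup-norm covering radius is therefore at most `N(I) √|Δ|`; complex places only improve this.
Passing from the sup norm to the Euclidean norm costs `√n` for `n` real embeddings, so a sup-norm
bound of `(n / 2) N(I) √|Δ|` is enough. For `n ≥ 2` we have just that, and for `n = 1` the integer
multiples of `N(I)` already come close enough.
-/

open MeasureTheory Metric NumberField.InfinitePlace NumberField.mixedEmbedding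
open scoped nonZeroDivisors NNReal

section Packing

variable {E : Type*} [SeminormedAddCommGroup E] {L : AddSubgroup E}

lemma exists_norm_mk_eq [PreconnectedSpace E] {p : E} {r : ℝ} (hr : 0 ≤ r)
    (hrp : r ≤ ‖(p : E ⧸ L)‖) : ∃ x : E, ‖(x : E ⧸ L)‖ = r :=
  mem_range_of_exists_le_of_exists_ge (continuous_quot_mk.norm)
    ⟨0, by rwa [QuotientAddGroup.mk_zero, norm_zero]⟩ ⟨p, hrp⟩

variable [MeasurableSpace E] [BorelSpace E] {μ : Measure E} [μ.IsAddLeftInvariant] [Countable L]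
  {F : Set E} {ρ : ℝ}

theorem card_mul_measure_ball_le {ι : Type*} [Fintype ι] (hF : IsAddFundamentalDomain L F μ)
    (hL : ∀ v ∈ L, v ≠ 0 → 2 * ρ ≤ ‖v‖) {x : ι → E}
    (hx : Pairwise fun j k ↦ 2 * ρ ≤ ‖(x j - x k : E ⧸ L)‖) :
    Fintype.card ι * μ (ball 0 ρ) ≤ μ F := by
  have hdisj : Pairwise (Function.onFun Disjoint fun k ↦ ball (x k) ρ) := fun j k hjk ↦
    ball_disjoint_ball <| by
      rw [dist_eq_norm, ← two_mul]
      exact (hx hjk).trans QuotientAddGroup.norm_mk_le_norm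
  have hball (k : ι) : μ (ball (x k) ρ) = μ (ball 0 ρ) := by
    rw [← vadd_ball_zero, measure_vadd]
  have hμ : μ (⋃ k, ball (x k) ρ) = Fintype.card ι * μ (ball 0 ρ) := by
    rw [measure_iUnion hdisj fun _ ↦ measurableSet_ball, tsum_fintype]
    simp [hball]
  rw [← hμ]
  by_contra! hlt
  obtain ⟨a, ha, b, hb, v, hv, rfl⟩ := hF.exists_ne_zero_vadd_eq
    (MeasurableSet.iUnion fun _ ↦ measurableSet_ball).nullMeasurableSet hlt
  obtain ⟨j, hj⟩ := Set.mem_iUnion.mp ha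
  obtain ⟨k, hk⟩ := Set.mem_iUnion.mp hb
  have hclose : ‖(v : E) + (x j - x k)‖ < 2 * ρ := by
    rw [mem_ball_iff_norm] at hj hk
    calc ‖(v : E) + (x j - x k)‖ = ‖((v : E) + a - x k) - (a - x j)‖ := by congr 1; abel
      _ ≤ ‖(v : E) + a - x k‖ + ‖a - x j‖ := norm_sub_le _ _
      _ < 2 * ρ := by rw [two_mul]; exact add_lt_add hk hj
  rcases eq_or_ne j k with rfl | hjk
  · rw [sub_self, add_zero] at hclose
    exact (hL v v.2 (by simpa using hv)).not_gt hclose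
  · have hmk : ((v + (x j - x k) : E) : E ⧸ L) = x j - x k := by
      rw [QuotientAddGroup.mk_add, (QuotientAddGroup.eq_zero_iff _).mpr v.2, zero_add]
      rfl
    refine (hx hjk).not_gt (lt_of_le_of_lt ?_ hclose)
    rw [← hmk]
    exact QuotientAddGroup.norm_mk_le_norm

theorem norm_mk_mul_measureReal_ball_lt [PreconnectedSpace E] [μ.IsOpenPosMeasure]
    (hF : IsAddFundamentalDomain L F μ) (hμF : μ F ≠ ⊤) (hρ : 0 < ρ)
    (hL : ∀ v ∈ L, v ≠ 0 → 2 * ρ ≤ ‖v‖) (p : E) :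
    ‖(p : E ⧸ L)‖ * μ.real (ball 0 ρ) < 2 * ρ * μ.real F := by
  set m := ⌊‖(p : E ⧸ L)‖ / (2 * ρ)⌋₊
  have hlevel (k : Fin (m + 1)) : ∃ x : E, ‖(x : E ⧸ L)‖ = 2 * ρ * k := by
    refine exists_norm_mk_eq (p := p) (by positivity) ?_
    rw [← le_div_iff₀' (by positivity)]
    exact (Nat.le_floor_iff (by positivity)).mp (Nat.lt_succ_iff.mp k.2)
  choose x hx using hlevel
  have hsep : Pairwise fun j k ↦ 2 * ρ ≤ ‖(x j - x k : E ⧸ L)‖ := fun j k hjk ↦ by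
    have hdist : (1 : ℝ) ≤ |(j : ℝ) - k| := by
      have hne : ((j : ℕ) : ℤ) - (k : ℕ) ≠ 0 :=
        sub_ne_zero.mpr (Nat.cast_injective.ne (Fin.val_ne_of_ne hjk))
      simpa using Int.cast_le (R := ℝ).mpr (Int.one_le_abs hne)
    calc 2 * ρ ≤ 2 * ρ * |(j : ℝ) - k| := le_mul_of_one_le_right (by positivity) hdist
      _ = |‖(x j : E ⧸ L)‖ - ‖(x k : E ⧸ L)‖| := by
        rw [hx, hx, ← mul_sub, abs_mul, abs_of_pos (by positivity : 0 < 2 * ρ)]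
      _ ≤ ‖(x j - x k : E ⧸ L)‖ := abs_norm_sub_norm_le _ _
  have hpack : (m + 1) * μ (ball 0 ρ) ≤ μ F := by
    simpa using card_mul_measure_ball_le hF hL hsep
  have hpack_real : (m + 1) * μ.real (ball 0 ρ) ≤ μ.real F := by
    simpa [measureReal_def, ENNReal.toReal_add] using ENNReal.toReal_mono hμF hpack
  have hball : 0 < μ.real (ball 0 ρ) :=
    ENNReal.toReal_pos (measure_ball_pos μ 0 hρ).ne' <|
      ne_top_of_le_ne_top hμF ((le_mul_of_one_le_left' (by simp)).trans hpack)
  calc ‖(p : E ⧸ L)‖ * μ.real (ball 0 ρ) < 2 * ρ * (m + 1) * μ.real (ball 0 ρ) := by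
        gcongr
        rw [← div_lt_iff₀' (by positivity)]
        exact Nat.lt_floor_add_one _
    _ ≤ 2 * ρ * μ.real F := by
        rw [mul_assoc]
        gcongr

end Packing

lemma sqrt_sum_sq_le {ι : Type*} [Fintype ι] {f : ι → ℝ} {C : ℝ} (hC : 0 ≤ C)
    (hf : ∀ i, |f i| ≤ C) : √(∑ i, f i ^ 2) ≤ √(Fintype.card ι) * C := by
  rw [← Real.sqrt_sq hC, ← Real.sqrt_mul (Nat.cast_nonneg _)]
  refine Real.sqrt_le_sqrt ?_
  simpa using Finset.sum_le_card_nsmul Finset.univ _ (C ^ 2) fun i _ ↦ sq_le_sq'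
    (neg_le_of_abs_le (hf i)) (le_of_abs_le (hf i))

section RealEmbeddings

variable {K ι : Type*} [Field K]

lemma exists_embedding_of_isReal_eq (s : K →+* ℝ) :
    ∃ w : {w : InfinitePlace K // IsReal w}, embedding_of_isReal w.2 = s := by
  have hreal : ComplexEmbedding.IsReal ((algebraMap ℝ ℂ).comp s) :=
    ComplexEmbedding.isReal_iff.mpr <| RingHom.ext fun x ↦ Complex.conj_ofReal (s x)
  refine ⟨⟨mk ((algebraMap ℝ ℂ).comp s), isReal_mk_iff.mpr hreal⟩, RingHom.ext fun x ↦ ?_⟩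
  apply Complex.ofReal_injective
  rw [embedding_of_isReal_apply, embedding_mk_eq_of_isReal hreal]
  rfl

open scoped Classical in
lemma exists_mixedSpace_abs_sub_le [NumberField K] {σ : ι → K →+* ℝ}
    (hσ : Function.Injective σ) (p : ι → ℝ) :
    ∃ x : mixedSpace K, ∀ a i, |p i - σ i a| ≤ ‖x - mixedEmbedding K a‖ := by
  choose w hw using fun i ↦ exists_embedding_of_isReal_eq (σ i)
  have hw_inj : Function.Injective w := fun i j hij ↦ hσ <| by rw [← hw i, ← hw j, hij]
  refine ⟨(Function.extend w p 0, 0), fun a i ↦ ?_⟩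
  have hcoord : p i - σ i a = (Function.extend w p 0 - (mixedEmbedding K a).1) (w i) := by
    rw [Pi.sub_apply, hw_inj.extend_apply, mixedEmbedding_apply_isReal, hw]
  rw [hcoord, ← Real.norm_eq_abs]
  exact (norm_le_pi_norm _ _).trans (norm_fst_le ((Function.extend w p 0, 0) - mixedEmbedding K a))

end RealEmbeddings

section MixedSpace

variable {K : Type*} [Field K]

open scoped Classical in
lemma convexBodyLT_const [NumberField K] {r : ℝ≥0} (hr : 0 < r) :
    convexBodyLT K (fun _ ↦ r) = ball 0 (r : ℝ) := by
  rw [convexBodyLT, ← ball_pi _ (NNReal.coe_pos.mpr hr), ← ball_pi _ (NNReal.coe_pos.mpr hr),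
    ball_prod_same]
  rfl

variable [NumberField K]

open scoped Classical in
lemma measureReal_ball_half :
    volume.real (ball (0 : mixedSpace K) (1 / 2)) = (Real.pi / 4) ^ nrComplexPlaces K := by
  have hball := convexBodyLT_const (K := K) (r := 1 / 2) (by norm_num)
  rw [NNReal.coe_div, NNReal.coe_one, NNReal.coe_ofNat] at hball
  rw [measureReal_def, ← hball, convexBodyLT_volume, Finset.prod_pow_eq_pow_sum, sum_mult_eq,
    ← card_add_two_mul_card_eq_rank, ← ENNReal.coe_mul, ENNReal.coe_toReal]
  push_cast
  rw [NNReal.coe_real_pi, pow_add, pow_mul, mul_mul_mul_comm, ← mul_pow, ← mul_pow]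
  norm_num
  ring

open scoped Classical in
lemma one_le_norm_mixedEmbedding {a : 𝓞 K} (ha : a ≠ 0) : 1 ≤ ‖mixedEmbedding K (a : K)‖ := by
  by_contra! hlt
  have hmem : mixedEmbedding K (a : K) ∈ convexBodyLT K fun _ ↦ 1 := by
    rw [convexBodyLT_const one_pos, mem_ball_zero_iff]
    exact hlt
  have hplaces := (convexBodyLT_mem K _).mp hmem
  obtain ⟨w⟩ : Nonempty (InfinitePlace K) := inferInstance
  exact (one_le_of_lt_one (w := w) ha fun z _ ↦ hplaces z).not_gt (hplaces w)

lemma mem_idealLattice_mk0 {I : (Ideal (𝓞 K))⁰} {x : mixedSpace K} :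
    x ∈ idealLattice K (FractionalIdeal.mk0 K I) ↔
      ∃ α ∈ (I : Ideal (𝓞 K)), mixedEmbedding K (α : K) = x := by
  simp only [mem_idealLattice, FractionalIdeal.coe_mk0]
  exact ⟨by rintro ⟨_, ⟨α, hα, rfl⟩, rfl⟩; exact ⟨α, hα, rfl⟩,
    by rintro ⟨α, hα, rfl⟩; exact ⟨_, ⟨α, hα, rfl⟩, rfl⟩⟩

open scoped Classical in
lemma measureReal_fundamentalDomain_mk0 (I : (Ideal (𝓞 K))⁰) :
    volume.real (ZSpan.fundamentalDomain
        (fractionalIdealLatticeBasis K (FractionalIdeal.mk0 K I))) =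
      2⁻¹ ^ nrComplexPlaces K * (Ideal.absNorm (I : Ideal (𝓞 K)) * √|(discr K : ℝ)|) := by
  rw [← ZLattice.covolume_eq_measure_fundamentalDomain _ _ (fundamentalDomain_idealLattice K _),
    covolume_idealLattice, FractionalIdeal.coe_mk0, FractionalIdeal.coeIdeal_absNorm,
    Rat.cast_natCast]
  ring

open scoped Classical in
theorem norm_mk_idealLattice_lt (I : (Ideal (𝓞 K))⁰) (x : mixedSpace K) :
    ‖(x : mixedSpace K ⧸ (idealLattice K (FractionalIdeal.mk0 K I)).toAddSubgroup)‖ <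
      (2 / Real.pi) ^ nrComplexPlaces K *
        (Ideal.absNorm (I : Ideal (𝓞 K)) * √|(discr K : ℝ)|) := by
  set L := idealLattice K (FractionalIdeal.mk0 K I)
  have hmin : ∀ v ∈ L.toAddSubgroup, v ≠ 0 → 2 * (1 / 2 : ℝ) ≤ ‖v‖ := by
    intro v hv hv0
    obtain ⟨α, -, rfl⟩ := mem_idealLattice_mk0.mp hv
    rw [mul_one_div_cancel two_ne_zero]
    exact one_le_norm_mixedEmbedding fun hα ↦ hv0 (by simp [hα])
  have : Countable L.toAddSubgroup := inferInstanceAs (Countable L)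
  have hdist := norm_mk_mul_measureReal_ball_lt (L := L.toAddSubgroup)
    (fundamentalDomain_idealLattice K _)
    (ZSpan.fundamentalDomain_isBounded _).measure_lt_top.ne one_half_pos hmin x
  rw [measureReal_ball_half, measureReal_fundamentalDomain_mk0,
    mul_one_div_cancel two_ne_zero, one_mul] at hdist
  have hconst : (2 / Real.pi) ^ nrComplexPlaces K * (Real.pi / 4) ^ nrComplexPlaces K =
      2⁻¹ ^ nrComplexPlaces K := by
    rw [← mul_pow]
    congr 1
    field_simp
    norm_num
  rw [← hconst, mul_right_comm] at hdist
  exact lt_of_mul_lt_mul_right hdist (by positivity)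

open scoped Classical in
theorem exists_mem_norm_sub_mixedEmbedding_lt {I : Ideal (𝓞 K)} (hI : I ≠ ⊥)
    (x : mixedSpace K) :
    ∃ α ∈ I, ‖x - mixedEmbedding K (α : K)‖ <
      (2 / Real.pi) ^ nrComplexPlaces K * (Ideal.absNorm I * √|(discr K : ℝ)|) := by
  lift I to (Ideal (𝓞 K))⁰ using mem_nonZeroDivisors_of_ne_zero hI
  have hlt := norm_mk_idealLattice_lt I x
  rw [QuotientAddGroup.norm_mk, infDist_lt_iff ⟨0, zero_mem _⟩] at hlt
  obtain ⟨_, hy, hxy⟩ := hlt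
  obtain ⟨α, hα, rfl⟩ := mem_idealLattice_mk0.mp hy
  exact ⟨α, hα, by rwa [← dist_eq_norm]⟩

end MixedSpace

section SimultaneousApproximation

variable {K ι : Type*} [Field K] [NumberField K] {I : Ideal (𝓞 K)}

theorem exists_mem_forall_abs_sub_lt (hI : I ≠ ⊥) {σ : ι → K →+* ℝ} (hσ : Function.Injective σ)
    (p : ι → ℝ) :
    ∃ α ∈ I, ∀ i, |p i - σ i (α : K)| < Ideal.absNorm I * √|(discr K : ℝ)| := by
  obtain ⟨x, hx⟩ := exists_mixedSpace_abs_sub_le hσ p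
  obtain ⟨α, hα, hlt⟩ := exists_mem_norm_sub_mixedEmbedding_lt hI x
  have hfactor : (2 / Real.pi) ^ nrComplexPlaces K ≤ 1 :=
    pow_le_one₀ (by positivity) (div_le_one_of_le₀ Real.two_le_pi (by positivity))
  exact ⟨α, hα, fun i ↦ ((hx α i).trans_lt hlt).trans_le <|
    mul_le_of_le_one_left (by positivity) hfactor⟩

lemma exists_mem_abs_sub_le_half_absNorm (hI : I ≠ ⊥) (s : K →+* ℝ) (t : ℝ) :
    ∃ α ∈ I, |t - s (α : K)| ≤ Ideal.absNorm I / 2 := by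
  set N := Ideal.absNorm I
  have hN : (0 : ℝ) < N :=
    Nat.cast_pos.mpr <| Nat.pos_of_ne_zero <| Ideal.absNorm_eq_zero_iff.not.mpr hI
  refine ⟨round (t / N) * N, I.mul_mem_left _ (Ideal.absNorm_mem I), ?_⟩
  calc |t - s ((round (t / N) * N : 𝓞 K) : K)| = |t / N - round (t / N)| * N := by
        rw [← abs_of_pos hN, ← abs_mul, abs_of_pos hN, sub_mul, div_mul_cancel₀ _ hN.ne']
        simp
    _ ≤ 1 / 2 * N := by gcongr; exact abs_sub_round _
    _ = N / 2 := by ring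

theorem exists_mem_forall_abs_sub_le_card_div_two_mul [Fintype ι] (hI : I ≠ ⊥) {σ : ι → K →+* ℝ}
    (hσ : Function.Injective σ) (p : ι → ℝ) :
    ∃ α ∈ I, ∀ i, |p i - σ i (α : K)| ≤
      Fintype.card ι / 2 * (Ideal.absNorm I * √|(discr K : ℝ)|) := by
  obtain h0 | h1 | h2 : Fintype.card ι = 0 ∨ Fintype.card ι = 1 ∨ 2 ≤ Fintype.card ι := by lia
  · exact ⟨0, I.zero_mem, (Fintype.card_eq_zero_iff.mp h0).elim⟩
  · obtain ⟨i₀, hi₀⟩ := Fintype.card_eq_one_iff.mp h1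
    obtain ⟨α, hα, hle⟩ := exists_mem_abs_sub_le_half_absNorm hI (σ i₀) (p i₀)
    have hdiscr : 1 ≤ √|(discr K : ℝ)| :=
      Real.one_le_sqrt.mpr (by exact_mod_cast Int.one_le_abs (discr_ne_zero K))
    refine ⟨α, hα, fun i ↦ ?_⟩
    rw [hi₀ i, h1, Nat.cast_one, one_div_mul_eq_div]
    refine hle.trans ?_
    gcongr
    exact le_mul_of_one_le_right (by positivity) hdiscr
  · obtain ⟨α, hα, hlt⟩ := exists_mem_forall_abs_sub_lt hI hσ p
    have hcard : (1 : ℝ) ≤ Fintype.card ι / 2 :=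
      (one_le_div two_pos).mpr (by exact_mod_cast h2)
    exact ⟨α, hα, fun i ↦ (hlt i).le.trans (le_mul_of_one_le_left (by positivity) hcard)⟩

theorem ideal_lattice_covering_radius_general [Fintype ι] (hI : I ≠ ⊥) {σ : ι → K →+* ℝ}
    (hσ : Function.Injective σ) (p : ι → ℝ) :
    ∃ α ∈ I, √(∑ i, (p i - σ i (α : K)) ^ 2) ≤
      (Fintype.card ι : ℝ) ^ ((3 : ℝ) / 2) / 2 *
        (Ideal.absNorm I * √|(discr K : ℝ)|) := by
  obtain ⟨α, hα, hle⟩ := exists_mem_forall_abs_sub_le_card_div_two_mul hI hσ p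
  have hpow : (Fintype.card ι : ℝ) ^ ((3 : ℝ) / 2) = Fintype.card ι * √(Fintype.card ι) := by
    rw [show (3 : ℝ) / 2 = 1 + 1 / 2 by norm_num,
      Real.rpow_one_add' (Nat.cast_nonneg _) (by norm_num), ← Real.sqrt_eq_rpow]
  refine ⟨α, hα, (sqrt_sum_sq_le (by positivity) hle).trans_eq ?_⟩
  rw [hpow]
  ring

end SimultaneousApproximation

/-- Let `K` be a totally real number field of degree `d` with real embeddings
`σ_1,…,σ_d`, `I ⊆ 𝒪_K` a nonzero ideal and `L_I = Σ(I) ⊂ ℝ^d` its image under the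
Minkowski embedding `Σ = (σ_1,…,σ_d)`. Then the Euclidean covering radius of `L_I`
satisfies `μ(L_I) ≤ (d^{3/2}/2)·N_K(I)·√|Δ_K|`: every point of `ℝ^d` is within that
distance of a point of `L_I`. -/
theorem ideal_lattice_covering_radius (K : Type*) [Field K] [NumberField K]
    (σ : Fin (Module.finrank ℚ K) → (K →+* ℝ)) (hσ : Function.Injective σ)
    (I : Ideal (𝓞 K)) (hI : I ≠ ⊥) :
    ∀ p : Fin (Module.finrank ℚ K) → ℝ, ∃ α ∈ I,
      Real.sqrt (∑ i, (p i - σ i (α : K)) ^ 2) ≤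
        (Module.finrank ℚ K : ℝ) ^ ((3 : ℝ) / 2) / 2 *
          ((Ideal.absNorm I : ℝ) * Real.sqrt |(discr K : ℝ)|) := by
  intro p
  simpa only [Fintype.card_fin] using ideal_lattice_covering_radius_general hI hσ p
end
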